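/- arXiv:1504.04299 — 5 statements merged into one kernel-verified Lean document; each statement's English description precedes it below -/
import Mathlib

section
/- Let G be a simple graph with vertex set V and adjacency matrix A(G) over GF(2). Then G is a circle graph if and only if the delta-matroid D_{A(G)} is Eulerian, i.e. there exist a circle graph G′ with vertex set V and a subset X ⊆ V such that D_{A(G)} = D_{A(G′)} * X. -/
/-!
One direction is the twist by `∅`. For the other one, suppose `D_{A(G)} = D_{A(H)} * X` with `H`
a circle graph. Since `∅ ∈ D_{A(G)}`, the set `X` belongs to `D_{A(H)}`, so `A(H)[X]` is nonsingular
and, if `X` is nonempty, it contains an edge `uv` of `H`. Pivoting on `uv` turns a word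
`p u a v b u c v q` representing `H` into the word `u a v q p u c v b`, which represents a circle
graph `K` with `D_{A(K)} = D_{A(H)} * {u, v}`. Thus `D_{A(G)} = D_{A(K)} * (X \ {u, v})`, and
induction on `|X|` reduces to `X = ∅`, where `D_{A(G)} = D_{A(H)}` forces `G = H`, because the
two-element members of `D_{A(G)}` are the edges of `G`.

Two devices keep the verification short.

* Interlacement is algebraic: if `i ≠ j` both occur twice in `w`, they are interlaced exactly when
  the number `pairCount w i j` of pairs of positions carrying `i` and then `j` is odd
  (`interlaced_iff_pairCount`). This number behaves bilinearly under concatenation, so the effect of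
  the pivot on words is a polynomial identity over `ZMod 2`.
* `X ∈ D_A` means that no nonzero pair `(x, A x)` has `x = 0` off `X` and `A x = 0` on `X`
  (`mem_dmOf_iff`). Pivoting exchanges the two coordinates of such pairs on `{u, v}`
  (`IsPivot.mulVec_swap`), hence twists the set system by `{u, v}` (`IsPivot.dmOf_eq`).
-/

open scoped Classical

/-! ## Double occurrence words and circle graphs -/

/-- Two elements are interlaced in the (cyclically read) word `w`:
their occurrences alternate `u…v…u…v`. -/
def Interlaced {V : Type} (w : List V) (u v : V) : Prop :=
  ∃ i j k l : Fin w.length, i < j ∧ j < k ∧ k < l ∧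
    ((w.get i = u ∧ w.get j = v ∧ w.get k = u ∧ w.get l = v) ∨
     (w.get i = v ∧ w.get j = u ∧ w.get k = v ∧ w.get l = u))

/-- `G` is a circle graph: there is a double occurrence word on its vertex set whose
interlacement relation is the adjacency relation of `G`. -/
def IsCircleGraph {V : Type} [DecidableEq V] (G : SimpleGraph V) : Prop :=
  ∃ w : List V, (∀ v : V, w.count v = 2) ∧
    ∀ u v : V, u ≠ v → (G.Adj u v ↔ Interlaced w u v)

/-! ## Delta-matroids (as set systems over a finite ground set) -/

/-- The principal submatrix `A[X]`. -/
def principalSub {V R : Type} (A : Matrix V V R) (X : Finset V) : Matrix X X R :=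
  A.submatrix Subtype.val Subtype.val

/-- The set system `D_A = {X ⊆ V : A[X] nonsingular}` of a square matrix over a field. -/
noncomputable def dmOf {V : Type} [Fintype V] [DecidableEq V] {R : Type} [Field R]
    (A : Matrix V V R) : Finset (Finset V) :=
  Finset.univ.filter (fun X => (principalSub A X).det ≠ 0)

/-- The twist `D * X`. -/
def dmTwist {V : Type} [DecidableEq V] (D : Finset (Finset V)) (X : Finset V) :
    Finset (Finset V) :=
  D.image (fun Y => symmDiff X Y)

/-- Loop complementation `D + X`: `Y ∈ D + X` iff the number of `Z ∈ D` with
`Y \ X ⊆ Z ⊆ Y` is odd. -/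
noncomputable def dmLoop {V : Type} [Fintype V] [DecidableEq V]
    (D : Finset (Finset V)) (X : Finset V) : Finset (Finset V) :=
  Finset.univ.filter (fun Y => Odd (D.filter (fun Z => Y \ X ⊆ Z ∧ Z ⊆ Y)).card)

/-- A set system is even if all its members have cardinalities of equal parity. -/
def dmEven {V : Type} (D : Finset (Finset V)) : Prop :=
  ∀ X ∈ D, ∀ Y ∈ D, X.card % 2 = Y.card % 2

/-- The adjacency matrix of a simple graph, over `GF(2)`. -/
noncomputable def adjMat {V : Type} (G : SimpleGraph V) : Matrix V V (ZMod 2) :=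
  Matrix.of fun i j => if G.Adj i j then 1 else 0

/-- A set system is regular if it is a twist of `D_A` for some skew-symmetric
principally unimodular real matrix `A`. -/
def dmRegular {V : Type} [Fintype V] [DecidableEq V] (D : Finset (Finset V)) : Prop :=
  ∃ A : Matrix V V ℝ, A.transpose = -A ∧
    (∀ X : Finset V, (principalSub A X).det ∈ ({0, 1, -1} : Set ℝ)) ∧
    ∃ X : Finset V, D = dmTwist (dmOf A) X

/-- A set system is Eulerian if it is a twist of `D_{A(G)}` for a circle graph `G`. -/
def dmEulerian {V : Type} [Fintype V] [DecidableEq V] (D : Finset (Finset V)) : Prop :=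
  ∃ (G : SimpleGraph V) (X : Finset V), IsCircleGraph G ∧ D = dmTwist (dmOf (adjMat G)) X

/-! ### Interlacement as a parity -/

/-- The number, modulo 2, of pairs of positions `p < q` of the word with `i` at `p` and
`j` at `q`. -/
def pairCount {V : Type} [DecidableEq V] : List V → V → V → ZMod 2
  | [], _, _ => 0
  | x :: w, i, j => (if x = i then (w.count j : ZMod 2) else 0) + pairCount w i j

theorem pairCount_append {V : Type} [DecidableEq V] (a b : List V) (i j : V) :
    pairCount (a ++ b) i j
      = pairCount a i j + pairCount b i j + (a.count i : ZMod 2) * (b.count j : ZMod 2) := by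
  induction a with
  | nil => simp [pairCount]
  | cons x a ih =>
    by_cases h : x = i
    · simp [pairCount, ih, h, List.count_append]; ring
    · simp [pairCount, ih, h]

theorem pairCount_eq_zero_left {V : Type} [DecidableEq V] (a : List V) (i j : V)
    (h : a.count i = 0) : pairCount a i j = 0 := by
  induction a with
  | nil => rfl
  | cons x a ih =>
    have hx : x ≠ i := by
      rintro rfl
      simp at h
    rw [List.count_cons_of_ne hx] at h
    simp [pairCount, hx, ih h]

theorem pairCount_eq_zero_right {V : Type} [DecidableEq V] (a : List V) (i j : V)
    (h : a.count j = 0) : pairCount a i j = 0 := by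
  induction a with
  | nil => rfl
  | cons x a ih =>
    have hx : x ≠ j := by
      rintro rfl
      simp at h
    rw [List.count_cons_of_ne hx] at h
    simp [pairCount, ih h, h]

theorem pairCount_filter {V : Type} [DecidableEq V] (w : List V) (i j : V) :
    pairCount (w.filter (fun x => decide (x = i ∨ x = j))) i j = pairCount w i j := by
  simp only [Bool.decide_or]
  induction w with
  | nil => rfl
  | cons x w ih =>
    by_cases hi : x = i
    · simp [pairCount, ih, hi, List.count_filter]
    · by_cases hj : x = j
      · subst hj
        simp [pairCount, ih, hi]
      · simp [pairCount, ih, hi, hj]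

theorem sublist_four_iff {V : Type} (w : List V) (a b c d : V) :
    List.Sublist [a, b, c, d] w ↔
      ∃ i j k l : Fin w.length, i < j ∧ j < k ∧ k < l ∧
        w.get i = a ∧ w.get j = b ∧ w.get k = c ∧ w.get l = d := by
  constructor
  · intro h
    obtain ⟨f, hf⟩ := List.sublist_iff_exists_fin_orderEmbedding_get_eq.1 h
    refine ⟨f ⟨0, by simp⟩, f ⟨1, by simp⟩, f ⟨2, by simp⟩, f ⟨3, by simp⟩, ?_, ?_, ?_,
      (hf _).symm, (hf _).symm, (hf _).symm, (hf _).symm⟩ <;>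
    · rw [f.lt_iff_lt]; simp [Fin.lt_def]
  · rintro ⟨i, j, k, l, hij, hjk, hkl, rfl, rfl, rfl, rfl⟩
    have := List.map_getElem_sublist (l := w) (is := [i, j, k, l]) (by
      simp only [List.pairwise_cons, List.mem_cons, List.not_mem_nil, or_false,
        forall_eq_or_imp, forall_eq]
      refine ⟨⟨hij, hij.trans hjk, (hij.trans hjk).trans hkl⟩, ⟨hjk, hjk.trans hkl⟩, hkl, ?_⟩
      simp)
    simpa using this

theorem interlaced_iff_sublist {V : Type} (w : List V) (u v : V) :
    Interlaced w u v ↔ List.Sublist [u, v, u, v] w ∨ List.Sublist [v, u, v, u] w := by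
  rw [sublist_four_iff, sublist_four_iff]
  unfold Interlaced
  constructor
  · rintro ⟨i, j, k, l, h1, h2, h3, h | h⟩
    · exact Or.inl ⟨i, j, k, l, h1, h2, h3, h⟩
    · exact Or.inr ⟨i, j, k, l, h1, h2, h3, h⟩
  · rintro (⟨i, j, k, l, h1, h2, h3, h⟩ | ⟨i, j, k, l, h1, h2, h3, h⟩)
    · exact ⟨i, j, k, l, h1, h2, h3, Or.inl h⟩
    · exact ⟨i, j, k, l, h1, h2, h3, Or.inr h⟩

theorem interlaced_comm {V : Type} (w : List V) (u v : V) :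
    Interlaced w u v ↔ Interlaced w v u := by
  rw [interlaced_iff_sublist, interlaced_iff_sublist, or_comm]

theorem interlaced_iff_pairCount_of_length {V : Type} [DecidableEq V] (f : List V) (u v : V)
    (huv : u ≠ v) (hmem : ∀ x ∈ f, x = u ∨ x = v) (hlen : f.length = 4)
    (hu : f.count u = 2) (hv : f.count v = 2) :
    (List.Sublist [u, v, u, v] f ∨ List.Sublist [v, u, v, u] f) ↔ pairCount f u v = 1 := by
  obtain ⟨a, b, c, d, rfl⟩ := List.length_eq_four.1 hlen
  have hs : ∀ x y : V, x ≠ y → ∀ l : List V, l.length = 4 →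
      (List.Sublist [x, y, x, y] l ↔ [x, y, x, y] = l) := by
    intro x y _ l hl
    exact ⟨fun h => h.eq_of_length (by simp [hl]), fun h => h ▸ List.Sublist.refl _⟩
  rw [hs u v huv _ hlen, hs v u huv.symm _ hlen]
  simp only [List.mem_cons, List.not_mem_nil, or_false, forall_eq_or_imp, forall_eq] at hmem
  obtain ⟨ha, hb, hc, hd⟩ := hmem
  rcases ha with rfl | rfl <;> rcases hb with rfl | rfl <;> rcases hc with rfl | rfl <;>
    rcases hd with rfl | rfl <;>
    simp [huv, huv.symm, pairCount] at hu hv ⊢ <;> decide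

/-- For two letters that both occur twice, the six possible patterns contain 4, 3, 2, 2, 1, 0 pairs
`u … v`, and the odd values belong to the alternating patterns. -/
theorem interlaced_iff_pairCount {V : Type} [DecidableEq V] (w : List V) (u v : V)
    (huv : u ≠ v) (hu : w.count u = 2) (hv : w.count v = 2) :
    Interlaced w u v ↔ pairCount w u v = 1 := by
  rw [interlaced_iff_sublist, ← pairCount_filter]
  have hcu : (w.filter (fun x => decide (x = u ∨ x = v))).count u = 2 := by
    rw [List.count_filter (by simp), hu]
  have hcv : (w.filter (fun x => decide (x = u ∨ x = v))).count v = 2 := by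
    rw [List.count_filter (by simp), hv]
  have hmem : ∀ x ∈ w.filter (fun x => decide (x = u ∨ x = v)), x = u ∨ x = v := by
    intro x hx
    simpa using (List.mem_filter.1 hx).2
  have hlen' : ∀ f : List V, (∀ x ∈ f, x = u ∨ x = v) → f.length = f.count u + f.count v := by
    intro f
    induction f with
    | nil => simp
    | cons x f ih =>
      intro h
      have := ih (fun y hy => h y (List.mem_cons_of_mem _ hy))
      rcases h x (by simp) with rfl | rfl
      · rw [List.count_cons_self, List.count_cons_of_ne huv, List.length_cons]; omega
      · rw [List.count_cons_self, List.count_cons_of_ne huv.symm, List.length_cons]; omega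
  have hlen := hlen' _ hmem
  rw [hcu, hcv] at hlen
  rw [← interlaced_iff_pairCount_of_length _ u v huv hmem hlen hcu hcv]
  have key : ∀ l : List V, (∀ x ∈ l, x = u ∨ x = v) →
      (List.Sublist l w ↔ List.Sublist l (w.filter (fun x => decide (x = u ∨ x = v)))) := by
    intro l hl
    constructor
    · intro h
      have h2 := h.filter (fun x => decide (x = u ∨ x = v))
      rwa [List.filter_eq_self.2 (by simpa using hl)] at h2
    · exact fun h => h.trans List.filter_sublist
  rw [key [u, v, u, v] (by simp), key [v, u, v, u] (by simp)]

/-! ### Set systems of matrices and pivoting -/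

/-- `A[X]` is nonsingular iff its kernel, viewed as vectors supported on `X`, is trivial. -/
theorem mem_dmOf_iff {V : Type} [Fintype V] [DecidableEq V] (A : Matrix V V (ZMod 2))
    (X : Finset V) :
    X ∈ dmOf A ↔ ∀ x : V → ZMod 2, (∀ i, i ∉ X → x i = 0) →
      (∀ i ∈ X, (A.mulVec x) i = 0) → x = 0 := by
  have hsum : ∀ x : V → ZMod 2, (∀ i, i ∉ X → x i = 0) → ∀ i : X,
      ((principalSub A X).mulVec (fun j : X => x j)) i = (A.mulVec x) i := by
    intro x hx i
    simp only [Matrix.mulVec, dotProduct, principalSub, Matrix.submatrix_apply]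
    rw [Finset.sum_coe_sort X (fun j => A i j * x j)]
    exact Finset.sum_subset (Finset.subset_univ _) (fun j _ hj => by rw [hx j hj, mul_zero])
  simp only [dmOf, Finset.mem_filter, Finset.mem_univ, true_and]
  rw [← not_iff_not, not_not, ← Matrix.exists_mulVec_eq_zero_iff]
  push Not
  constructor
  · rintro ⟨y, hy, hAy⟩
    have hx : ∀ i, i ∉ X → (fun i => if h : i ∈ X then y ⟨i, h⟩ else 0 : V → ZMod 2) i = 0 := by
      intro i hi
      simp [hi]
    have hxy : (fun j : X => (fun i => if h : i ∈ X then y ⟨i, h⟩ else 0 : V → ZMod 2) j) = y := by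
      ext j
      simp
    refine ⟨_, hx, ?_, ?_⟩
    · intro i hi
      rw [← hsum _ hx ⟨i, hi⟩, hxy, hAy]
      rfl
    · intro h
      apply hy
      rw [← hxy, h]
      rfl
  · rintro ⟨x, hx, hAx, hne⟩
    refine ⟨fun j => x j, ?_, ?_⟩
    · intro h
      apply hne
      ext i
      by_cases hi : i ∈ X
      · exact congrFun h ⟨i, hi⟩
      · exact hx i hi
    · ext i
      rw [hsum x hx i, hAx i i.2]
      rfl

theorem mem_dmTwist_iff {V : Type} [DecidableEq V] (D : Finset (Finset V)) (X Y : Finset V) :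
    Y ∈ dmTwist D X ↔ symmDiff X Y ∈ D := by
  simp only [dmTwist, Finset.mem_image]
  constructor
  · rintro ⟨Z, hZ, rfl⟩
    rwa [symmDiff_symmDiff_cancel_left]
  · intro h
    exact ⟨_, h, symmDiff_symmDiff_cancel_left _ _⟩

/-- `B` is the principal pivot transform of `A` on `{u, v}`, where `A[{u, v}]` has zero diagonal
and off-diagonal entries 1, over `GF(2)`. The relation is symmetric in `A` and `B`. -/
structure IsPivot {V : Type} (A B : Matrix V V (ZMod 2)) (u v : V) : Prop where
  ne : u ≠ v
  auu : A u u = 0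
  avv : A v v = 0
  auv : A u v = 1
  avu : A v u = 1
  buu : B u u = 0
  bvv : B v v = 0
  buv : B u v = 1
  bvu : B v u = 1
  colu : ∀ i, i ≠ u → i ≠ v → B i u = A i v
  colv : ∀ i, i ≠ u → i ≠ v → B i v = A i u
  rowu : ∀ i, i ≠ u → i ≠ v → B u i = A v i
  rowv : ∀ i, i ≠ u → i ≠ v → B v i = A u i
  rest : ∀ i j, i ≠ u → i ≠ v → j ≠ u → j ≠ v →
    B i j = A i j + A i u * A v j + A i v * A u j

theorem IsPivot.symm {V : Type} {A B : Matrix V V (ZMod 2)} {u v : V} (h : IsPivot A B u v) :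
    IsPivot B A u v where
  ne := h.ne
  auu := h.buu
  avv := h.bvv
  auv := h.buv
  avu := h.bvu
  buu := h.auu
  bvv := h.avv
  buv := h.auv
  bvu := h.avu
  colu := fun i h1 h2 => (h.colv i h1 h2).symm
  colv := fun i h1 h2 => (h.colu i h1 h2).symm
  rowu := fun i h1 h2 => (h.rowv i h1 h2).symm
  rowv := fun i h1 h2 => (h.rowu i h1 h2).symm
  rest := fun i j h1 h2 h3 h4 => by
    rw [h.rest i j h1 h2 h3 h4, h.colu i h1 h2, h.colv i h1 h2, h.rowu j h3 h4, h.rowv j h3 h4]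
    have h2 : (2 : ZMod 2) = 0 := rfl
    linear_combination (-(A i u * A v j) - A i v * A u j) * h2

/-- Exchanging `x` and `A x` on the coordinates `u`, `v` maps the graph of `A` into that
of `B`. -/
theorem IsPivot.mulVec_swap {V : Type} [Fintype V] [DecidableEq V]
    {A B : Matrix V V (ZMod 2)} {u v : V} (h : IsPivot A B u v) (x : V → ZMod 2) :
    B.mulVec (fun i => if i = u ∨ i = v then (A.mulVec x) i else x i)
      = fun i => if i = u ∨ i = v then x i else (A.mulVec x) i := by
  have hsplit : ∀ f : V → ZMod 2,
      ∑ j, f j = f u + f v + ∑ j ∈ ({u, v} : Finset V)ᶜ, f j := by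
    intro f
    rw [← Finset.sum_add_sum_compl {u, v} f, Finset.sum_pair h.ne]
  have hA : ∀ i, (A.mulVec x) i = A i u * x u + A i v * x v
      + ∑ j ∈ ({u, v} : Finset V)ᶜ, A i j * x j := fun i => hsplit _
  have hmem : ∀ j ∈ ({u, v} : Finset V)ᶜ, j ≠ u ∧ j ≠ v := by
    intro j hj
    simpa using hj
  have hB : ∀ i, (B.mulVec (fun i => if i = u ∨ i = v then (A.mulVec x) i else x i)) i
      = B i u * (A.mulVec x) u + B i v * (A.mulVec x) v
        + ∑ j ∈ ({u, v} : Finset V)ᶜ, B i j * x j := by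
    intro i
    refine (hsplit _).trans ?_
    simp only [true_or, or_true, if_true]
    congr 1
    refine Finset.sum_congr rfl fun j hj => ?_
    simp [(hmem j hj).1, (hmem j hj).2]
  have h2 : (2 : ZMod 2) = 0 := rfl
  have hau := hA u
  have hav := hA v
  rw [h.auu, h.auv] at hau
  rw [h.avu, h.avv] at hav
  ext i
  rw [hB i]
  by_cases hiu : i = u
  · subst hiu
    rw [h.buu, h.buv, Finset.sum_congr rfl
      (fun j hj => by rw [h.rowu j (hmem j hj).1 (hmem j hj).2])]
    simp only [true_or, if_true]
    rw [hav]
    linear_combination (∑ j ∈ ({i, v} : Finset V)ᶜ, A v j * x j) * h2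
  by_cases hiv : i = v
  · subst hiv
    rw [h.bvu, h.bvv, Finset.sum_congr rfl
      (fun j hj => by rw [h.rowv j (hmem j hj).1 (hmem j hj).2])]
    simp only [or_true, if_true]
    rw [hau]
    linear_combination (∑ j ∈ ({u, i} : Finset V)ᶜ, A u j * x j) * h2
  · have hs : ∑ j ∈ ({u, v} : Finset V)ᶜ, B i j * x j
        = ∑ j ∈ ({u, v} : Finset V)ᶜ, A i j * x j
          + A i u * ∑ j ∈ ({u, v} : Finset V)ᶜ, A v j * x j
          + A i v * ∑ j ∈ ({u, v} : Finset V)ᶜ, A u j * x j := by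
      rw [Finset.mul_sum, Finset.mul_sum, ← Finset.sum_add_distrib, ← Finset.sum_add_distrib]
      refine Finset.sum_congr rfl fun j hj => ?_
      rw [h.rest i j hiu hiv (hmem j hj).1 (hmem j hj).2]
      ring
    rw [hs, h.colu i hiu hiv, h.colv i hiu hiv]
    simp only [hiu, hiv, or_self, if_false]
    rw [hA i, hau, hav]
    linear_combination (A i u * ∑ j ∈ ({u, v} : Finset V)ᶜ, A v j * x j
      + A i v * ∑ j ∈ ({u, v} : Finset V)ᶜ, A u j * x j) * h2

theorem IsPivot.mem_of_mem {V : Type} [Fintype V] [DecidableEq V]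
    {A B : Matrix V V (ZMod 2)} {u v : V} (h : IsPivot A B u v) (X : Finset V)
    (hX : symmDiff {u, v} X ∈ dmOf B) : X ∈ dmOf A := by
  rw [mem_dmOf_iff] at hX ⊢
  intro x hx hAx
  have hsw := h.mulVec_swap x
  have hm : ∀ i, i ∈ symmDiff {u, v} X ↔ ((i = u ∨ i = v) ↔ i ∉ X) := by
    intro i
    simp only [Finset.mem_symmDiff, Finset.mem_insert, Finset.mem_singleton]
    tauto
  have h0 := hX (fun i => if i = u ∨ i = v then (A.mulVec x) i else x i) ?_ ?_
  · rw [h0, Matrix.mulVec_zero] at hsw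
    ext i
    have e1 := congrFun h0 i
    have e2 := congrFun hsw i
    by_cases hi : i = u ∨ i = v
    · simp only [hi, if_true] at e2
      exact e2.symm
    · simp only [hi, if_false] at e1
      exact e1
  · intro i hi
    rw [hm] at hi
    by_cases hiP : i = u ∨ i = v
    · simp only [hiP, if_true]
      exact hAx i (by tauto)
    · simp only [hiP, if_false]
      exact hx i (by tauto)
  · intro i hi
    rw [hm] at hi
    rw [hsw]
    by_cases hiP : i = u ∨ i = v
    · simp only [hiP, if_true]
      exact hx i (by tauto)
    · simp only [hiP, if_false]
      exact hAx i (by tauto)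

theorem IsPivot.dmOf_eq {V : Type} [Fintype V] [DecidableEq V]
    {A B : Matrix V V (ZMod 2)} {u v : V} (h : IsPivot A B u v) (X : Finset V) :
    X ∈ dmOf A ↔ symmDiff {u, v} X ∈ dmOf B := by
  refine ⟨fun hX => h.symm.mem_of_mem _ ?_, h.mem_of_mem X⟩
  rwa [symmDiff_symmDiff_cancel_left]

/-! ### Pivoting circle graphs -/

theorem adjMat_eq_pairCount {V : Type} [DecidableEq V] (G : SimpleGraph V) (w : List V)
    (hw : ∀ v, w.count v = 2) (hG : ∀ u v, u ≠ v → (G.Adj u v ↔ Interlaced w u v))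
    (i j : V) (hij : i ≠ j) : adjMat G i j = pairCount w i j := by
  have h := (hG i j hij).trans (interlaced_iff_pairCount w i j hij (hw i) (hw j))
  have h01 : ∀ z : ZMod 2, z ≠ 1 → z = 0 := by decide
  by_cases ha : G.Adj i j
  · simp [adjMat, ha, h.1 ha]
  · simp [adjMat, ha, h01 _ (fun e => ha (h.2 e))]

theorem adjMat_symm {V : Type} (G : SimpleGraph V) (i j : V) : adjMat G i j = adjMat G j i := by
  simp [adjMat, G.adj_comm]

theorem adjMat_self {V : Type} (G : SimpleGraph V) (i : V) : adjMat G i i = 0 := by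
  simp [adjMat]

theorem exists_decomp_of_sublist {V : Type} (w : List V) (u v : V)
    (h : List.Sublist [u, v, u, v] w) :
    ∃ p a b c q : List V,
      w = p ++ ([u] ++ (a ++ ([v] ++ (b ++ ([u] ++ (c ++ ([v] ++ q))))))) := by
  have step : ∀ (x : V) (l r : List V), List.Sublist (x :: l) r →
      ∃ s t, r = s ++ ([x] ++ t) ∧ List.Sublist l t := by
    intro x l r hr
    obtain ⟨r1, r2, rfl, hx, hl⟩ := List.cons_sublist_iff.1 hr
    obtain ⟨s, t, rfl⟩ := List.append_of_mem hx
    exact ⟨s, t ++ r2, by simp, hl.trans (List.sublist_append_right _ _)⟩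
  obtain ⟨p, t1, rfl, h1⟩ := step _ _ _ h
  obtain ⟨a, t2, rfl, h2⟩ := step _ _ _ h1
  obtain ⟨b, t3, rfl, h3⟩ := step _ _ _ h2
  obtain ⟨c, q, rfl, -⟩ := step _ _ _ h3
  exact ⟨p, a, b, c, q, rfl⟩

/-- The pivot of the graph represented by `p u a v b u c v q` on the edge `uv` is represented by
`u a v q p u c v b`, that is, the cyclic intervals `b` and `q p` trade places. -/
theorem exists_pivot_of_sublist {V : Type} [DecidableEq V] (G : SimpleGraph V) (w : List V)
    (hw : ∀ v, w.count v = 2) (hG : ∀ u v, u ≠ v → (G.Adj u v ↔ Interlaced w u v))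
    (u v : V) (huv : u ≠ v) (h : List.Sublist [u, v, u, v] w) :
    ∃ K : SimpleGraph V, IsCircleGraph K ∧ IsPivot (adjMat G) (adjMat K) u v := by
  obtain ⟨p, a, b, c, q, rfl⟩ := exists_decomp_of_sublist w u v h
  have hw' : ∀ x, ([u] ++ (a ++ ([v] ++ (q ++ (p ++ ([u] ++ (c ++ ([v] ++ b)))))))).count x
      = 2 := by
    intro x
    rw [← hw x]
    simp only [List.count_append]
    omega
  have hA := adjMat_eq_pairCount G _ hw hG
  let K : SimpleGraph V :=
    { Adj := fun i j => i ≠ j ∧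
        Interlaced ([u] ++ (a ++ ([v] ++ (q ++ (p ++ ([u] ++ (c ++ ([v] ++ b)))))))) i j
      symm := ⟨fun i j hij => ⟨hij.1.symm, (interlaced_comm _ _ _).1 hij.2⟩⟩
      loopless := ⟨fun i hi => hi.1 rfl⟩ }
  have hK : ∀ i j, i ≠ j → (K.Adj i j ↔
      Interlaced ([u] ++ (a ++ ([v] ++ (q ++ (p ++ ([u] ++ (c ++ ([v] ++ b)))))))) i j) :=
    fun i j hij => ⟨fun h => h.2, fun h => ⟨hij, h⟩⟩
  have hB := adjMat_eq_pairCount K _ hw' hK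
  refine ⟨K, ⟨_, hw', hK⟩, ?_⟩
  have h2 : (2 : ZMod 2) = 0 := rfl
  have hsum : ∀ i, i ≠ u → i ≠ v → (p.count i : ZMod 2)
      = a.count i + b.count i + c.count i + q.count i := by
    intro i hiu hiv
    have := congrArg (Nat.cast : ℕ → ZMod 2) (hw i)
    simp only [List.count_append, List.count_singleton, beq_iff_eq, hiu.symm, hiv.symm,
      if_false, Nat.cast_add, Nat.cast_zero, Nat.cast_ofNat] at this
    linear_combination this +
      (1 - (a.count i + b.count i + c.count i + q.count i : ZMod 2)) * h2
  have hu := hw u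
  have hv := hw v
  simp only [List.count_append, List.count_singleton, beq_iff_eq, huv, huv.symm,
    if_true, if_false] at hu hv
  obtain ⟨pu, au, bu, cu, qu⟩ : p.count u = 0 ∧ a.count u = 0 ∧ b.count u = 0 ∧ c.count u = 0 ∧
    q.count u = 0 := by omega
  obtain ⟨pv, av, bv, cv, qv⟩ : p.count v = 0 ∧ a.count v = 0 ∧ b.count v = 0 ∧ c.count v = 0 ∧
    q.count v = 0 := by omega
  have hzu : ∀ (l : List V), l.count u = 0 → ∀ i, pairCount l i u = 0 :=
    fun l hl i => pairCount_eq_zero_right l i u hl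
  have hzv : ∀ (l : List V), l.count v = 0 → ∀ i, pairCount l i v = 0 :=
    fun l hl i => pairCount_eq_zero_right l i v hl
  have auv : adjMat G u v = 1 := by
    rw [hA u v huv]
    simp only [pairCount_append, List.count_append, List.count_singleton, beq_iff_eq, huv, huv.symm,
      if_true, if_false, pu, au, bu, cu, pv, av, bv, cv, qv, hzv, pairCount, List.count_nil]
    decide
  have buv : adjMat K u v = 1 := by
    rw [hB u v huv]
    simp only [pairCount_append, List.count_append, List.count_singleton, beq_iff_eq, huv, huv.symm,
      if_true, if_false, pu, au, cu, qu, pv, av, bv, cv, qv, hzv, pairCount, List.count_nil]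
    decide
  have aiu : ∀ i, i ≠ u → i ≠ v → adjMat G i u = a.count i + b.count i := by
    intro i hiu hiv
    rw [hA i u hiu]
    simp only [pairCount_append, List.count_append, List.count_singleton, beq_iff_eq, huv.symm,
      hiu.symm, hiv.symm, if_true, if_false, pu, au, bu, cu, qu, hzu, pairCount]
    push_cast
    linear_combination (p.count i : ZMod 2) * h2
  have aiv : ∀ i, i ≠ u → i ≠ v → adjMat G i v = b.count i + c.count i := by
    intro i hiu hiv
    rw [hA i v hiv]
    simp only [pairCount_append, List.count_append, List.count_singleton, beq_iff_eq, huv,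
      hiu.symm, hiv.symm, if_true, if_false, pv, av, bv, cv, qv, hzv, pairCount]
    push_cast
    linear_combination (p.count i + a.count i : ZMod 2) * h2
  have biu : ∀ i, i ≠ u → i ≠ v → adjMat K i u = a.count i + q.count i + p.count i := by
    intro i hiu hiv
    rw [hB i u hiu]
    simp only [pairCount_append, List.count_append, List.count_singleton, beq_iff_eq, huv.symm,
      hiu.symm, hiv.symm, if_true, if_false, pu, au, bu, cu, qu, hzu, pairCount]
    push_cast
    ring
  have biv : ∀ i, i ≠ u → i ≠ v → adjMat K i v = q.count i + p.count i + c.count i := by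
    intro i hiu hiv
    rw [hB i v hiv]
    simp only [pairCount_append, List.count_append, List.count_singleton, beq_iff_eq, huv,
      hiu.symm, hiv.symm, if_true, if_false, pv, av, bv, cv, qv, hzv, pairCount]
    push_cast
    linear_combination (a.count i : ZMod 2) * h2
  have colu : ∀ i, i ≠ u → i ≠ v → adjMat K i u = adjMat G i v := by
    intro i hiu hiv
    rw [biu i hiu hiv, aiv i hiu hiv, hsum i hiu hiv]
    linear_combination (a.count i + q.count i : ZMod 2) * h2
  have colv : ∀ i, i ≠ u → i ≠ v → adjMat K i v = adjMat G i u := by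
    intro i hiu hiv
    rw [biv i hiu hiv, aiu i hiu hiv, hsum i hiu hiv]
    linear_combination (c.count i + q.count i : ZMod 2) * h2
  refine
    { ne := huv
      auu := adjMat_self _ _
      avv := adjMat_self _ _
      auv := auv
      avu := by rw [adjMat_symm, auv]
      buu := adjMat_self _ _
      bvv := adjMat_self _ _
      buv := buv
      bvu := by rw [adjMat_symm, buv]
      colu := colu
      colv := colv
      rowu := fun i h1 h3 => by rw [adjMat_symm, colu i h1 h3, adjMat_symm]
      rowv := fun i h1 h3 => by rw [adjMat_symm, colv i h1 h3, adjMat_symm]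
      rest := ?_ }
  intro i j hiu hiv hju hjv
  by_cases hij : i = j
  · subst hij
    rw [adjMat_self, adjMat_self, adjMat_symm G v i, adjMat_symm G u i]
    linear_combination -(adjMat G i u * adjMat G i v) * h2
  rw [hA i j hij, hB i j hij, adjMat_symm G v j, adjMat_symm G u j, aiu i hiu hiv, aiv i hiu hiv,
    aiu j hju hjv, aiv j hju hjv]
  simp only [pairCount_append, List.count_append, List.count_singleton, beq_iff_eq,
    hiu.symm, hiv.symm, hju.symm, hjv.symm, if_false, pairCount]
  push_cast
  rw [hsum i hiu hiv, hsum j hju hjv]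
  generalize (a.count i : ZMod 2) = ai
  generalize (b.count i : ZMod 2) = bi
  generalize (c.count i : ZMod 2) = ci
  generalize (q.count i : ZMod 2) = qi
  generalize (a.count j : ZMod 2) = aj
  generalize (b.count j : ZMod 2) = bj
  generalize (c.count j : ZMod 2) = cj
  generalize (q.count j : ZMod 2) = qj
  -- Every coefficient of the difference of the two sides is even.
  rw [← sub_eq_zero]
  ring_nf
  reduce_mod_char

/-- Pivoting a circle graph on an edge `uv` gives a circle graph. The pair `x, y` is `u, v` in the
order in which the two vertices first occur in the word. -/
theorem exists_pivot {V : Type} [DecidableEq V] (G : SimpleGraph V) (hG : IsCircleGraph G)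
    (u v : V) (h : G.Adj u v) :
    ∃ (K : SimpleGraph V) (x y : V), ({x, y} : Finset V) = {u, v} ∧ IsCircleGraph K ∧
      IsPivot (adjMat G) (adjMat K) x y := by
  obtain ⟨w, hw, hadj⟩ := hG
  rcases (interlaced_iff_sublist w u v).1 ((hadj u v h.ne).1 h) with hs | hs
  · obtain ⟨K, h1, h2⟩ := exists_pivot_of_sublist G w hw hadj u v h.ne hs
    exact ⟨K, u, v, rfl, h1, h2⟩
  · obtain ⟨K, h1, h2⟩ := exists_pivot_of_sublist G w hw hadj v u h.ne.symm hs
    exact ⟨K, v, u, Finset.pair_comm _ _, h1, h2⟩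

/-! ### Reduction of the twist -/

theorem exists_adj_of_mem {V : Type} [Fintype V] [DecidableEq V] (G : SimpleGraph V)
    (X : Finset V) (hX : X ∈ dmOf (adjMat G)) (u : V) (hu : u ∈ X) :
    ∃ v ∈ X, G.Adj u v := by
  by_contra! hno
  rw [mem_dmOf_iff] at hX
  have := hX (Pi.single u 1) (fun i hi => Pi.single_eq_of_ne (fun e : i = u => hi (e.symm ▸ hu)) _) (by
    intro i hi
    rw [Matrix.mulVec_single_one, Matrix.col_apply, adjMat_symm]
    simp [adjMat, hno i hi])
  simpa using congrFun this u

theorem pair_mem_dmOf_iff {V : Type} [Fintype V] [DecidableEq V] (G : SimpleGraph V)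
    (u v : V) (huv : u ≠ v) : ({u, v} : Finset V) ∈ dmOf (adjMat G) ↔ G.Adj u v := by
  constructor
  · intro h
    obtain ⟨w, hw, hadj⟩ := exists_adj_of_mem G _ h u (by simp)
    rcases Finset.mem_insert.1 hw with rfl | hw
    · exact absurd rfl hadj.ne
    · rwa [Finset.mem_singleton.1 hw] at hadj
  · intro h
    rw [mem_dmOf_iff]
    intro x hx hAx
    have hm : ∀ i, (adjMat G).mulVec x i = adjMat G i u * x u + adjMat G i v * x v := by
      intro i
      rw [← Finset.sum_pair (f := fun j => adjMat G i j * x j) huv]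
      exact (Finset.sum_subset (Finset.subset_univ _)
        (fun j _ hj => by rw [hx j hj, mul_zero])).symm
    have e1 := hAx u (by simp)
    have e2 := hAx v (by simp)
    rw [hm] at e1 e2
    simp [adjMat, h] at e1
    simp [adjMat, h.symm] at e2
    ext i
    by_cases hi : i ∈ ({u, v} : Finset V)
    · rcases Finset.mem_insert.1 hi with rfl | hi
      · exact e2
      · rw [Finset.mem_singleton.1 hi]
        exact e1
    · exact hx i hi

theorem empty_mem_dmOf {V : Type} [Fintype V] [DecidableEq V] (A : Matrix V V (ZMod 2)) :
    ∅ ∈ dmOf A := by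
  rw [mem_dmOf_iff]
  intro x hx _
  ext i
  exact hx i (by simp)

/-- Induction on the size of the twisting set, which shrinks by a pivot on an edge inside it. -/
theorem circle_of_twist {V : Type} [Fintype V] [DecidableEq V] (G : SimpleGraph V) (n : ℕ) :
    ∀ (X : Finset V) (H : SimpleGraph V), X.card = n → IsCircleGraph H →
      (∀ Y, Y ∈ dmOf (adjMat G) ↔ symmDiff X Y ∈ dmOf (adjMat H)) → IsCircleGraph G := by
  induction n using Nat.strong_induction_on with
  | _ n ih =>
    intro X H hn hH hD
    rcases X.eq_empty_or_nonempty with rfl | ⟨u, hu⟩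
    · have : G = H := by
        ext i j
        by_cases hij : i = j
        · subst hij
          simp
        · rw [← pair_mem_dmOf_iff G i j hij, ← pair_mem_dmOf_iff H i j hij, hD, ← Finset.bot_eq_empty,
            bot_symmDiff]
      rwa [this]
    · have hX : X ∈ dmOf (adjMat H) := by
        have := (hD ∅).1 (empty_mem_dmOf _)
        rwa [← Finset.bot_eq_empty, symmDiff_bot] at this
      obtain ⟨v, hv, huv⟩ := exists_adj_of_mem H X hX u hu
      obtain ⟨K, x, y, hxy, hK, hpiv⟩ := exists_pivot H hH u v huv
      have hsub : ({u, v} : Finset V) ⊆ X := by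
        intro i hi
        rcases Finset.mem_insert.1 hi with rfl | hi
        · exact hu
        · rwa [Finset.mem_singleton.1 hi]
      have hsd : symmDiff ({u, v} : Finset V) X = X \ {u, v} := by
        rw [symmDiff_of_le hsub]
      refine ih _ ?_ (X \ {u, v}) K rfl hK ?_
      · rw [← hn]
        refine Finset.card_lt_card (Finset.ssubset_iff_subset_ne.2 ⟨Finset.sdiff_subset, ?_⟩)
        intro e
        rw [← e] at hu
        simp at hu
      · intro Y
        rw [hD, hpiv.dmOf_eq, hxy, ← symmDiff_assoc, hsd]

/-- `G` is a circle graph iff the delta-matroid `D_{A(G)}` is Eulerian,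
i.e. `D_{A(G)} = D_{A(G')} * X` for some circle graph `G'` on the same vertex set and
some `X ⊆ V`. -/
theorem circle_iff_dm_eulerian {V : Type} [Fintype V] [DecidableEq V]
    (G : SimpleGraph V) :
    IsCircleGraph G ↔ dmEulerian (dmOf (adjMat G)) := by
  constructor
  · intro h
    refine ⟨G, ∅, h, ?_⟩
    ext Y
    rw [mem_dmTwist_iff, ← Finset.bot_eq_empty, bot_symmDiff]
  · rintro ⟨H, X, hH, hD⟩
    refine circle_of_twist G _ X H rfl hH fun Y => ?_
    rw [hD, mem_dmTwist_iff]
end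

section
/- Let G be the interlacement graph of an Euler circuit of K_{4,4}. Then: (i) every circuit of the isotropic matroid M[IAS(G)] of size at most 3 is a vertex triple; (ii) every circuit of M[IAS(G)] of size 4 is a subtransversal, so the smallest transverse circuits of G have size exactly 4; and (iii) if a transverse matroid of G contains two disjoint circuits, then both of these circuits have size 4 and that transverse matroid contains at least six circuits of size 4. -/
/-!
Write `V` for the vertex set of `K_{4,4}` and `A` for the adjacency matrix of the interlacement
graph `G`. A set of columns of `IAS(G)` sums to zero iff its coefficient vectors on `I` and on `A`
have the form `(A d, d)` with `d ∈ GF(2)^V`, and adding a vertex triple does not change these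
vectors. So circuits are understood through the vectors `(A d, d)`, whose support consists of the
`v` with `((A d) v, d v) ≠ (0, 0)`.

Label each edge of the Euler circuit by the sum of `d` over the vertices visited before it. Each
vertex `v` is visited twice, so these labels form an even subgraph of `K_{4,4}`, i.e. a 4 × 4
matrix over GF(2) with zero row and column sums. The label changes by `d v` at both passages through
`v`, and it changes by `(A d) v` between them, because the vertices interlaced with `v` are those
seen once in between. Hence `(A d, d)` vanishes at `v` iff the row or column of `v` is constant
(`EulerSeq.isConstAt_edgeMat_iff`, `nbrSum_interlacement`). Every even subgraph arises in this way up
to complement (`EulerSeq.exists_edgeMat_eq`), so `M[IAS(G)]` is encoded by the cycle space of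
`K_{4,4}` modulo complement (`IsCode`, `exists_isCode`).

What is left concerns even 4 × 4 matrices. Unless all lines (rows and columns) are constant, at
least four are not (`IsEvenMat.const_or_weight`), and a 4-cycle attains this bound; this gives the
statements about circuits of size at most 4. Two disjoint circuits in a transversal give two even
matrices `M` and `N` with four nonconstant lines each, at complementary places. The mixed
differences of such matrices depend only on which lines are constant, so those of `M` and `N`
coincide and `M + N = p i + q j` for vectors `p`, `q` with two ones each. The matrices `p i`, `q j`
and the four products of `p i` or `p i + 1` with `q j` or `q j + 1` then yield six circuits of size 4
in the transversal (`exists_six`, `IsCode.six_circuits`).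
-/

open scoped Classical

/-! ## Isotropic matroids -/

/-- The column of `IAS(G) = (I | A | I + A)` indexed by `p = (v, i)`:
`i = 0` gives `φ(v)`, `i = 1` gives `χ(v)`, `i = 2` gives `ψ(v)`. -/
noncomputable def iasCol {V : Type} (G : SimpleGraph V) (p : V × Fin 3) : V → ZMod 2 :=
  fun w =>
    (if p.2 = 0 ∨ p.2 = 2 then (if w = p.1 then (1 : ZMod 2) else 0) else 0) +
    (if p.2 = 1 ∨ p.2 = 2 then (if G.Adj w p.1 then (1 : ZMod 2) else 0) else 0)

/-- `S` is independent in the isotropic matroid `M[IAS(G)]`. -/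
def IasIndep {V : Type} (G : SimpleGraph V) (S : Finset (V × Fin 3)) : Prop :=
  LinearIndependent (ZMod 2) (fun p : S => iasCol G p.1)

/-- `C` is a circuit of `M[IAS(G)]`: a minimal dependent set. -/
def IasCircuit {V : Type} (G : SimpleGraph V) (C : Finset (V × Fin 3)) : Prop :=
  ¬ IasIndep G C ∧ ∀ D ⊂ C, IasIndep G D

/-- `T` is a transversal of `W(G)`: exactly one element of each vertex triple. -/
def IsTransversal {V : Type} (T : Finset (V × Fin 3)) : Prop :=
  ∀ v : V, ∃! i : Fin 3, (v, i) ∈ T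

/-- `S` is a subtransversal of `W(G)`: at most one element of each vertex triple. -/
def IsSubtransversal {V : Type} (S : Finset (V × Fin 3)) : Prop :=
  ∀ v : V, ∀ i j : Fin 3, (v, i) ∈ S → (v, j) ∈ S → i = j

/-- A transverse circuit of `G`: a circuit of `M[IAS(G)]` contained in a transversal. -/
def TransverseCircuit {V : Type} (G : SimpleGraph V) (C : Finset (V × Fin 3)) : Prop :=
  IasCircuit G C ∧ ∃ T : Finset (V × Fin 3), IsTransversal T ∧ C ⊆ T

/-! ## Euler circuits and interlacement graphs -/

/-- The interlacement graph of a closed walk `w`: two distinct vertices are adjacent iff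
their occurrences alternate around the cyclic vertex sequence of `w`. -/
def interlacement {V : Type} {F : SimpleGraph V} {x : V} (w : F.Walk x x) :
    SimpleGraph V :=
  SimpleGraph.fromRel (fun u v => Interlaced w.support.dropLast u v)

/-- The complete bipartite graph `K_{4,4}`. -/
def K44 : SimpleGraph (Fin 4 ⊕ Fin 4) := completeBipartiteGraph (Fin 4) (Fin 4)

/-! ### Even 4 × 4 matrices over GF(2) -/

/-- The line of the matrix `M` at a vertex of `K_{4,4}`: a row for a vertex of the left part, a column
for a vertex of the right part. A matrix is read as a GF(2)-labelling of the edges of `K_{4,4}`. -/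
def line (M : Fin 4 → Fin 4 → ZMod 2) : Fin 4 ⊕ Fin 4 → Fin 4 → ZMod 2
  | .inl i, j => M i j
  | .inr j, i => M i j

/-- All edges at `v` carry the same label. -/
def IsConstAt (M : Fin 4 → Fin 4 → ZMod 2) (v : Fin 4 ⊕ Fin 4) : Prop :=
  ∀ a, line M v a = line M v 0

instance (M : Fin 4 → Fin 4 → ZMod 2) (v : Fin 4 ⊕ Fin 4) : Decidable (IsConstAt M v) := by
  unfold IsConstAt; infer_instance

theorem line_add (M N : Fin 4 → Fin 4 → ZMod 2) (v : Fin 4 ⊕ Fin 4) (a : Fin 4) :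
    line (M + N) v a = line M v a + line N v a := by
  rcases v with i | j <;> rfl

theorem IsConstAt.iff_of_add {M N : Fin 4 → Fin 4 → ZMod 2} {v : Fin 4 ⊕ Fin 4}
    (h : IsConstAt (M + N) v) : IsConstAt M v ↔ IsConstAt N v := by
  refine forall_congr' fun a => ?_
  have ha := h a
  rw [line_add, line_add] at ha
  revert ha
  generalize line M v a = x
  generalize line M v 0 = y
  generalize line N v a = z
  generalize line N v 0 = t
  revert x y z t
  decide

theorem isConstAt_add_const (M N : Fin 4 → Fin 4 → ZMod 2) (c : ZMod 2)
    (h : ∀ i j, N i j = M i j + c) (v : Fin 4 ⊕ Fin 4) : IsConstAt N v ↔ IsConstAt M v := by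
  refine forall_congr' fun a => ?_
  rcases v with i | j <;> simp [line, h]

/-- The number of nonconstant lines of `M`. -/
def weight (M : Fin 4 → Fin 4 → ZMod 2) : ℕ :=
  (Finset.univ.filter fun v => ¬ IsConstAt M v).card

/-- All row and column sums vanish, i.e. `M` is the indicator of an even subgraph of `K_{4,4}`. -/
def IsEvenMat (M : Fin 4 → Fin 4 → ZMod 2) : Prop :=
  (∀ i, ∑ j, M i j = 0) ∧ ∀ j, ∑ i, M i j = 0

/-- The vector of length 4 with the given first three entries and sum zero. -/
def evenVec (a b c : ZMod 2) : Fin 4 → ZMod 2 := ![a, b, c, a + b + c]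

/-- The even matrix with the given upper left 3 × 3 block. -/
def completion (a b c d e f g h i : ZMod 2) : Fin 4 → Fin 4 → ZMod 2 :=
  ![evenVec a b c, evenVec d e f, evenVec g h i, evenVec (a + d + g) (b + e + h) (c + f + i)]

theorem eq_evenVec (p : Fin 4 → ZMod 2) (hp : ∑ j, p j = 0) : p = evenVec (p 0) (p 1) (p 2) := by
  rw [Fin.sum_univ_four, CharTwo.add_eq_zero] at hp
  funext j
  fin_cases j <;> simp [evenVec, hp]

theorem IsEvenMat.eq_completion {M : Fin 4 → Fin 4 → ZMod 2} (hM : IsEvenMat M) :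
    M = completion (M 0 0) (M 0 1) (M 0 2) (M 1 0) (M 1 1) (M 1 2) (M 2 0) (M 2 1) (M 2 2) := by
  have hcol : ∀ j, M 3 j = M 0 j + M 1 j + M 2 j := by
    intro j
    have := hM.2 j
    rw [Fin.sum_univ_four, CharTwo.add_eq_zero] at this
    exact this.symm
  funext i
  fin_cases i
  · exact eq_evenVec _ (hM.1 0)
  · exact eq_evenVec _ (hM.1 1)
  · exact eq_evenVec _ (hM.1 2)
  · refine (eq_evenVec _ (hM.1 3)).trans ?_
    rw [hcol, hcol, hcol]
    rfl

/-- Checked over all 512 even matrices. -/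
theorem completion_const_or_weight : ∀ a b c d e f g h i : ZMod 2,
    (∀ v, IsConstAt (completion a b c d e f g h i) v) ∨
      4 ≤ weight (completion a b c d e f g h i) := by
  decide +kernel

/-- Apart from those with all lines constant (the empty and the full subgraph), even subgraphs of
`K_{4,4}` have at least four vertices of degree 2. -/
theorem IsEvenMat.const_or_weight {M : Fin 4 → Fin 4 → ZMod 2} (hM : IsEvenMat M) :
    (∀ v, IsConstAt M v) ∨ 4 ≤ weight M := by
  rw [hM.eq_completion]
  exact completion_const_or_weight ..

/-- The mixed second difference of `M` based at the entry `(0, 0)`; `M` is a row function plus a column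
function iff it vanishes identically. -/
def mixedDiff (M : Fin 4 → Fin 4 → ZMod 2) (i j : Fin 4) : ZMod 2 :=
  M i j + M i 0 + M 0 j + M 0 0

/-- The lines of `M` at `u` and `v` are both constant or both nonconstant. -/
def SameType (M : Fin 4 → Fin 4 → ZMod 2) (u v : Fin 4 ⊕ Fin 4) : Prop :=
  IsConstAt M u ↔ IsConstAt M v

instance (M : Fin 4 → Fin 4 → ZMod 2) (u v : Fin 4 ⊕ Fin 4) : Decidable (SameType M u v) := by
  unfold SameType; infer_instance

theorem completion_mixedDiff : ∀ a b c d e f g h i : ZMod 2,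
    weight (completion a b c d e f g h i) = 4 → ∀ k l,
      mixedDiff (completion a b c d e f g h i) k l = 0 ↔
        SameType (completion a b c d e f g h i) (.inl k) (.inl 0) ∨
        SameType (completion a b c d e f g h i) (.inr l) (.inr 0) := by
  decide +kernel

/-- An even matrix of weight 4 is, up to complement, the indicator of a 2 × 2 submatrix or of two full
rows or columns. Hence its mixed differences are determined by which of its lines are constant. -/
theorem IsEvenMat.mixedDiff_eq_zero_iff {M : Fin 4 → Fin 4 → ZMod 2} (hM : IsEvenMat M)
    (hw : weight M = 4) (k l : Fin 4) :
    mixedDiff M k l = 0 ↔ SameType M (.inl k) (.inl 0) ∨ SameType M (.inr l) (.inr 0) := by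
  rw [hM.eq_completion] at hw ⊢
  exact completion_mixedDiff _ _ _ _ _ _ _ _ _ hw k l

/-- For `p` and `q` with two ones each: the two matrices constant along rows or columns given by `p`
and `q`, and the indicators of the four 2 × 2 blocks cut out by `p` and `q`. -/
def sixMat (p q : Fin 4 → ZMod 2) : Fin 6 → Fin 4 → Fin 4 → ZMod 2 :=
  ![fun i _ => p i, fun _ j => q j, fun i j => p i * q j, fun i j => (p i + 1) * q j,
    fun i j => p i * (q j + 1), fun i j => (p i + 1) * (q j + 1)]

/-- The properties of `sixMat p q` used below: even, of weight 4, at every line agreeing up to a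
constant with either `0` or `p i + q j`, and pairwise distinct modulo complement. -/
def SixGood (p q : Fin 4 → ZMod 2) : Prop :=
  (∀ k, (∀ i, ∑ j, sixMat p q k i j = 0) ∧ ∀ j, ∑ i, sixMat p q k i j = 0) ∧
  (∀ k, weight (sixMat p q k) = 4) ∧
  (∀ k v, IsConstAt (sixMat p q k) v ∨ IsConstAt (sixMat p q k + fun i j => p i + q j) v) ∧
  (∀ k l, (∀ i j, sixMat p q k i j + sixMat p q l i j = sixMat p q k 0 0 + sixMat p q l 0 0) →
    k = l)

instance (p q : Fin 4 → ZMod 2) : Decidable (SixGood p q) := by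
  unfold SixGood; infer_instance

/-- A nonconstant vector of length 4 with even sum has exactly two ones; the claim is checked over all
such pairs of vectors. -/
theorem sixGood_evenVec : ∀ a b c d e f : ZMod 2,
    (∃ i, evenVec a b c i ≠ evenVec a b c 0) → (∃ j, evenVec d e f j ≠ evenVec d e f 0) →
      SixGood (evenVec a b c) (evenVec d e f) := by
  decide +kernel

/-- If two even matrices of weight 4 have complementary sets of nonconstant lines, then there are six
even matrices of weight 4, distinct modulo complement, each of which agrees at every line, up to a
constant, with `0` or with `M + N`. -/
theorem exists_six {M N : Fin 4 → Fin 4 → ZMod 2} (hM : IsEvenMat M) (hN : IsEvenMat N)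
    (hMw : weight M = 4) (hNw : weight N = 4) (hMN : ∀ v, IsConstAt N v ↔ ¬ IsConstAt M v) :
    ∃ S : Fin 6 → Fin 4 → Fin 4 → ZMod 2,
      (∀ k, IsEvenMat (S k)) ∧ (∀ k, weight (S k) = 4) ∧
      (∀ k v, IsConstAt (S k) v ∨ IsConstAt (S k + (M + N)) v) ∧
      ∀ k l, (∃ c, ∀ i j, S k i j = S l i j + c) → k = l := by
  -- The mixed differences of `M` and `N` agree, because they depend only on which lines have the
  -- same type, so `M + N` is a row function plus a column function.
  have hD : ∀ i j, mixedDiff M i j = mixedDiff N i j := by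
    intro i j
    have h1 := hM.mixedDiff_eq_zero_iff hMw i j
    have h2 := hN.mixedDiff_eq_zero_iff hNw i j
    have h3 : mixedDiff M i j = 0 ↔ mixedDiff N i j = 0 := by
      rw [h1, h2]
      simp only [SameType, hMN, not_iff_not]
    revert h3
    generalize mixedDiff M i j = a
    generalize mixedDiff N i j = b
    revert a b
    decide
  let p : Fin 4 → ZMod 2 := fun i => (M + N) i 0
  let q : Fin 4 → ZMod 2 := fun j => (M + N) 0 j + (M + N) 0 0
  have hpq : M + N = fun i j => p i + q j := by
    funext i j
    have h := hD i j
    simp only [mixedDiff] at h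
    simp only [p, q, Pi.add_apply]
    linear_combination h + (N i j - M i 0 - M 0 j - M 0 0) * CharTwo.two_eq_zero (R := ZMod 2)
  have hnc : ∀ v, ¬ IsConstAt (M + N) v := by
    intro v hv
    have h1 := hv.iff_of_add
    have h2 := hMN v
    tauto
  have hMNe : IsEvenMat (M + N) := by
    refine ⟨fun i => ?_, fun j => ?_⟩
    · simp [Finset.sum_add_distrib, hM.1 i, hN.1 i]
    · simp [Finset.sum_add_distrib, hM.2 j, hN.2 j]
  have hp : ∑ i, p i = 0 := hMNe.2 0
  have hq : ∑ j, q j = 0 := by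
    simp only [q, Finset.sum_add_distrib]
    rw [hMNe.1 0]
    simp only [Finset.sum_const, Finset.card_univ, Fintype.card_fin, zero_add]
    generalize (M + N) 0 0 = a
    revert a
    decide
  have hp' : ∃ i, p i ≠ p 0 := by
    by_contra! h
    exact hnc (.inr 0) h
  have hq' : ∃ j, q j ≠ q 0 := by
    by_contra! h
    refine hnc (.inl 0) fun j => ?_
    have := h j
    simp only [q] at this
    exact add_right_cancel this
  have hgood : SixGood p q := by
    rw [eq_evenVec p hp] at hp' ⊢
    rw [eq_evenVec q hq] at hq' ⊢
    exact sixGood_evenVec _ _ _ _ _ _ hp' hq'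
  refine ⟨sixMat p q, hgood.1, hgood.2.1, ?_, ?_⟩
  · rw [hpq]
    exact hgood.2.2.1
  · rintro k l ⟨c, hc⟩
    refine hgood.2.2.2 k l fun i j => ?_
    rw [hc i j, hc 0 0]
    rw [add_right_comm, CharTwo.add_self_eq_zero, add_right_comm, CharTwo.add_self_eq_zero]

/-! ### Euler circuits of `K_{4,4}` as sequences -/

/-- The vertex sequence of an Euler circuit of `K_{4,4}`: the closed sequence `s 0, …, s 16 = s 0`
traverses each of the 16 edges exactly once. Values of `s` beyond 16 are irrelevant. -/
structure EulerSeq (s : ℕ → Fin 4 ⊕ Fin 4) : Prop where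
  closed : s 16 = s 0
  adj : ∀ k < 16, K44.Adj (s k) (s (k + 1))
  inj : ∀ k < 16, ∀ l < 16, s(s k, s (k + 1)) = s(s l, s (l + 1)) → k = l
  surj : ∀ u v, K44.Adj u v → ∃ k < 16, s(s k, s (k + 1)) = s(u, v)

namespace EulerSeq

variable {s : ℕ → Fin 4 ⊕ Fin 4}

/-- A sum over the edges at `v` as a sum over the steps of the circuit that leave or enter `v`. -/
theorem sum_nbr (hs : EulerSeq s) {R : Type} [CommSemiring R]
    (m : Fin 4 ⊕ Fin 4 → Fin 4 ⊕ Fin 4 → R)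
    (hm : ∀ u v, m u v = m v u) (v : Fin 4 ⊕ Fin 4) :
    ∑ u, (if K44.Adj v u then m v u else 0) =
      ∑ k ∈ Finset.range 16, ((if s k = v then m (s k) (s (k + 1)) else 0) +
        (if s (k + 1) = v then m (s k) (s (k + 1)) else 0)) := by
  have h1 : ∀ u, (if K44.Adj v u then m v u else 0) =
      ∑ k ∈ Finset.range 16,
        if s(s k, s (k + 1)) = s(v, u) then m (s k) (s (k + 1)) else 0 := by
    intro u
    split_ifs with h
    · obtain ⟨k, hk, hke⟩ := hs.surj v u h
      rw [Finset.sum_eq_single k]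
      · rw [if_pos hke]
        rcases Sym2.eq_iff.1 hke with ⟨h1, h2⟩ | ⟨h1, h2⟩
        · rw [h1, h2]
        · rw [h1, h2, hm]
      · intro l hl hlk
        rw [if_neg]
        intro hle
        exact hlk (hs.inj l (Finset.mem_range.1 hl) k hk (hle.trans hke.symm))
      · intro hk'
        exact absurd (Finset.mem_range.2 hk) hk'
    · symm
      apply Finset.sum_eq_zero
      intro k hk
      rw [if_neg]
      intro hke
      apply h
      have := hs.adj k (Finset.mem_range.1 hk)
      rw [← SimpleGraph.mem_edgeSet, hke] at this
      exact this
  simp_rw [h1]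
  rw [Finset.sum_comm]
  refine Finset.sum_congr rfl fun k hk => ?_
  have hne := (hs.adj k (Finset.mem_range.1 hk)).ne
  by_cases ha : s k = v
  · have hb : s (k + 1) ≠ v := fun h => hne (ha.trans h.symm)
    rw [if_pos ha, if_neg hb, add_zero, Finset.sum_eq_single (s (k + 1))]
    · rw [if_pos (by rw [ha])]
    · intro u _ hu
      rw [if_neg]
      rw [Sym2.eq_iff]
      rintro (⟨_, h2⟩ | ⟨_, h2⟩)
      · exact hu h2.symm
      · exact hb h2
    · simp
  · by_cases hb : s (k + 1) = v
    · rw [if_neg ha, if_pos hb, zero_add, Finset.sum_eq_single (s k)]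
      · rw [if_pos (by rw [hb]; exact Sym2.eq_swap)]
      · intro u _ hu
        rw [if_neg]
        rw [Sym2.eq_iff]
        rintro (⟨h2, _⟩ | ⟨h2, _⟩)
        · exact ha h2
        · exact hu h2.symm
      · simp
    · rw [if_neg ha, if_neg hb, add_zero]
      apply Finset.sum_eq_zero
      intro u _
      rw [if_neg]
      rw [Sym2.eq_iff]
      rintro (⟨h2, _⟩ | ⟨_, h2⟩)
      · exact ha h2
      · exact hb h2

theorem sum_shift {R : Type} [AddCommMonoid R] (g : ℕ → R) (hg : g 16 = g 0) :
    ∑ k ∈ Finset.range 16, g (k + 1) = ∑ k ∈ Finset.range 16, g k := by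
  rw [Finset.sum_range_succ, hg, Finset.sum_range_succ' g 15]

theorem degree_eq (v : Fin 4 ⊕ Fin 4) : ∑ u, (if K44.Adj v u then 1 else 0) = 4 := by
  rw [Fintype.sum_sum_type]
  rcases v with i | j <;> simp [K44, completeBipartiteGraph]

/-- Every vertex occurs exactly twice among positions `0, …, 15`. -/
theorem exists_positions (hs : EulerSeq s) (v : Fin 4 ⊕ Fin 4) :
    ∃ i j, i < j ∧ j < 16 ∧ ∀ k < 16, s k = v ↔ k = i ∨ k = j := by
  have h := hs.sum_nbr (fun _ _ => 1) (fun _ _ => rfl) v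
  rw [degree_eq, Finset.sum_add_distrib,
    sum_shift (fun k => if s k = v then 1 else 0) (by rw [hs.closed]),
    ← Finset.card_filter] at h
  have h2 : ((Finset.range 16).filter (fun k => s k = v)).card = 2 := by omega
  obtain ⟨i, j, hij, hf⟩ := Finset.card_eq_two.1 h2
  have hmem : ∀ k, (k < 16 ∧ s k = v) ↔ k = i ∨ k = j := by
    intro k
    have := Finset.ext_iff.1 hf k
    simpa using this
  have hi := (hmem i).2 (Or.inl rfl)
  have hj := (hmem j).2 (Or.inr rfl)
  rcases lt_or_gt_of_ne hij with h | h
  · exact ⟨i, j, h, hj.1, fun k hk => by rw [← hmem k]; tauto⟩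
  · exact ⟨j, i, h, hi.1, fun k hk => by rw [or_comm, ← hmem k]; tauto⟩

theorem of_walk {x : Fin 4 ⊕ Fin 4} (w : K44.Walk x x) (hw : w.IsEulerian) :
    w.length = 16 ∧ EulerSeq w.getVert := by
  have hlen : w.length = 16 := by
    rw [← SimpleGraph.Walk.length_edges, ← List.toFinset_card_of_nodup hw.isTrail.edges_nodup]
    have : w.edges.toFinset = (Finset.univ : Finset (Fin 4 × Fin 4)).image
        (fun p => s(Sum.inl p.1, Sum.inr p.2)) := by
      ext e
      rw [List.mem_toFinset, hw.mem_edges_iff]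
      induction e with
      | _ u v =>
        rcases u with u | u <;> rcases v with v | v <;>
          simp [K44, completeBipartiteGraph]
    rw [this, Finset.card_image_of_injective]
    · rfl
    · rintro ⟨a, b⟩ ⟨c, d⟩ h
      simpa using h
  have hget : ∀ k (hk : k < w.edges.length), w.edges[k] = s(w.getVert k, w.getVert (k + 1)) := by
    intro k hk
    simp [SimpleGraph.Walk.edges, SimpleGraph.Walk.darts_getElem_eq_getVert]
  have hel : w.edges.length = 16 := by rw [SimpleGraph.Walk.length_edges, hlen]
  refine ⟨hlen, ?_, ?_, ?_, ?_⟩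
  · rw [← hlen]; simp
  · intro k hk
    exact w.adj_getVert_succ (by omega)
  · intro k hk l hl h
    rw [← hget k (by omega), ← hget l (by omega)] at h
    exact (hw.isTrail.edges_nodup.getElem_inj_iff).1 h
  · intro u v huv
    have : s(u, v) ∈ w.edges := hw.mem_edges_iff.2 huv
    obtain ⟨k, hk, hke⟩ := List.mem_iff_getElem.1 this
    exact ⟨k, by omega, by rw [← hget k hk, hke]⟩

end EulerSeq

/-! ### Partial sums along an Euler circuit -/

/-- The edge labelling `M` as a symmetric function of two vertices. -/
def symmExt (M : Fin 4 → Fin 4 → ZMod 2) : Fin 4 ⊕ Fin 4 → Fin 4 ⊕ Fin 4 → ZMod 2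
  | .inl i, .inr j => M i j
  | .inr j, .inl i => M i j
  | _, _ => 0

theorem symmExt_comm (M : Fin 4 → Fin 4 → ZMod 2) (u v) : symmExt M u v = symmExt M v u := by
  rcases u with u | u <;> rcases v with v | v <;> rfl

theorem isConstAt_iff (M : Fin 4 → Fin 4 → ZMod 2) (v) :
    IsConstAt M v ↔ ∃ c, ∀ u, K44.Adj v u → symmExt M v u = c := by
  rcases v with i | j
  · simp [IsConstAt, line, K44, completeBipartiteGraph, symmExt]
    exact ⟨fun h => ⟨_, h⟩, fun ⟨c, h⟩ a => (h a).trans (h 0).symm⟩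
  · simp [IsConstAt, line, K44, completeBipartiteGraph, symmExt]
    exact ⟨fun h => ⟨_, h⟩, fun ⟨c, h⟩ a => (h a).trans (h 0).symm⟩

theorem sum_symmExt_inl (M : Fin 4 → Fin 4 → ZMod 2) (i) :
    ∑ u, (if K44.Adj (.inl i) u then symmExt M (.inl i) u else 0) = ∑ j, M i j := by
  rw [Fintype.sum_sum_type]
  simp [K44, completeBipartiteGraph, symmExt]

theorem sum_symmExt_inr (M : Fin 4 → Fin 4 → ZMod 2) (j) :
    ∑ u, (if K44.Adj (.inr j) u then symmExt M (.inr j) u else 0) = ∑ i, M i j := by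
  rw [Fintype.sum_sum_type]
  simp [K44, completeBipartiteGraph, symmExt]

theorem isEvenMat_iff (M : Fin 4 → Fin 4 → ZMod 2) :
    IsEvenMat M ↔ ∀ v, ∑ u, (if K44.Adj v u then symmExt M v u else 0) = 0 := by
  constructor
  · rintro ⟨h1, h2⟩ (i | j)
    · rw [sum_symmExt_inl, h1]
    · rw [sum_symmExt_inr, h2]
  · intro h
    exact ⟨fun i => by rw [← sum_symmExt_inl, h], fun j => by rw [← sum_symmExt_inr, h]⟩

namespace EulerSeq

variable {s : ℕ → Fin 4 ⊕ Fin 4}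

/-- The sum of `d` over the first `k` vertices of the sequence `s`. -/
def partialSum (s : ℕ → Fin 4 ⊕ Fin 4) (d : Fin 4 ⊕ Fin 4 → ZMod 2) (k : ℕ) : ZMod 2 :=
  ∑ l ∈ Finset.range k, d (s l)

theorem partialSum_zero (d) : partialSum s d 0 = 0 := by simp [partialSum]

theorem partialSum_succ (d k) : partialSum s d (k + 1) = partialSum s d k + d (s k) := by
  simp [partialSum, Finset.sum_range_succ]

theorem filter_positions {v : Fin 4 ⊕ Fin 4} {i j : ℕ} (hij : i < j) (hj : j < 16)
    (h : ∀ k < 16, s k = v ↔ k = i ∨ k = j) :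
    (Finset.range 16).filter (fun k => s k = v) = {i, j} := by
  ext k
  simp only [Finset.mem_filter, Finset.mem_range, Finset.mem_insert, Finset.mem_singleton]
  constructor
  · rintro ⟨hk, hv⟩
    exact (h k hk).1 hv
  · intro hk
    have : k < 16 := by omega
    exact ⟨this, (h k this).2 hk⟩

/-- Each vertex occurs twice, so the sum around the whole circuit vanishes in characteristic 2. -/
theorem partialSum_sixteen (hs : EulerSeq s) (d) : partialSum s d 16 = 0 := by
  have h1 : ∀ k, d (s k) = ∑ v, if s k = v then d v else 0 := by simp
  unfold partialSum
  simp_rw [h1]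
  rw [Finset.sum_comm]
  apply Finset.sum_eq_zero
  intro v _
  obtain ⟨i, j, hij, hj, h⟩ := hs.exists_positions v
  rw [← Finset.sum_filter, filter_positions hij hj h, Finset.sum_pair hij.ne,
    CharTwo.add_self_eq_zero]

/-- The edge labelling in which the step from position `k` to position `k + 1` carries the partial sum
of `d` over positions `0, …, k`. -/
noncomputable def edgeMat (s : ℕ → Fin 4 ⊕ Fin 4) (d : Fin 4 ⊕ Fin 4 → ZMod 2) :
    Fin 4 → Fin 4 → ZMod 2 := fun i j =>
  ∑ k ∈ Finset.range 16,
    if s(s k, s (k + 1)) = s(Sum.inl i, Sum.inr j) then partialSum s d (k + 1) else 0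

theorem edgeMat_add (d e) : edgeMat s (d + e) = edgeMat s d + edgeMat s e := by
  funext i j
  simp only [edgeMat, Pi.add_apply, ← Finset.sum_add_distrib]
  refine Finset.sum_congr rfl fun k _ => ?_
  split_ifs
  · simp [partialSum, Finset.sum_add_distrib]
  · simp

theorem symmExt_edgeMat (hs : EulerSeq s) (d) {k : ℕ} (hk : k < 16) :
    symmExt (edgeMat s d) (s k) (s (k + 1)) = partialSum s d (k + 1) := by
  have key : ∀ i j, s(s k, s (k + 1)) = s(Sum.inl i, Sum.inr j) →
      edgeMat s d i j = partialSum s d (k + 1) := by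
    intro i j h
    unfold edgeMat
    rw [Finset.sum_eq_single k, if_pos h]
    · intro l hl hlk
      rw [if_neg]
      exact fun h' => hlk (hs.inj l (Finset.mem_range.1 hl) k hk (h'.trans h.symm))
    · exact fun h' => absurd (Finset.mem_range.2 hk) h'
  have hadj := hs.adj k hk
  rcases hu : s k with i | i <;> rcases hv : s (k + 1) with j | j
  · simp [hu, hv, K44, completeBipartiteGraph] at hadj
  · exact key i j (by rw [hu, hv])
  · exact key j i (by rw [hu, hv]; exact Sym2.eq_swap)
  · simp [hu, hv, K44, completeBipartiteGraph] at hadj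

/-- If the edge labels of `M` read along the circuit are `y 1, …, y 16 = y 0`, then the line sum of
`M` at `v` is the sum of the labels around the two passages through `v`. -/
theorem sum_nbr_eq (hs : EulerSeq s) (M : Fin 4 → Fin 4 → ZMod 2) (y : ℕ → ZMod 2)
    (hy0 : y 16 = y 0) (hy : ∀ k < 16, symmExt M (s k) (s (k + 1)) = y (k + 1))
    {v : Fin 4 ⊕ Fin 4} {i j : ℕ} (hij : i < j) (hj : j < 16)
    (h : ∀ k < 16, s k = v ↔ k = i ∨ k = j) :
    ∑ u, (if K44.Adj v u then symmExt M v u else 0) = (y i + y (i + 1)) + (y j + y (j + 1)) := by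
  rw [hs.sum_nbr _ (symmExt_comm M), Finset.sum_add_distrib]
  have e1 : ∀ k ∈ Finset.range 16, (if s (k + 1) = v then symmExt M (s k) (s (k + 1)) else 0) =
      (fun k => if s k = v then y k else 0) (k + 1) := by
    intro k hk
    simp only [hy k (Finset.mem_range.1 hk)]
  rw [Finset.sum_congr rfl e1, sum_shift (fun k => if s k = v then y k else 0)
    (by simp [hs.closed, hy0]), ← Finset.sum_add_distrib]
  have e2 : ∀ k ∈ Finset.range 16, ((if s k = v then symmExt M (s k) (s (k + 1)) else 0) +
      if s k = v then y k else 0) = if s k = v then y k + y (k + 1) else 0 := by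
    intro k hk
    rw [hy k (Finset.mem_range.1 hk)]
    split_ifs
    · rw [add_comm]
    · simp
  rw [Finset.sum_congr rfl e2, ← Finset.sum_filter, filter_positions hij hj h,
    Finset.sum_pair hij.ne]

theorem isEvenMat_edgeMat (hs : EulerSeq s) (d) : IsEvenMat (edgeMat s d) := by
  rw [isEvenMat_iff]
  intro v
  obtain ⟨i, j, hij, hj, h⟩ := hs.exists_positions v
  rw [hs.sum_nbr_eq _ (partialSum s d) (by rw [hs.partialSum_sixteen, partialSum_zero])
    (fun k hk => hs.symmExt_edgeMat d hk) hij hj h, partialSum_succ, partialSum_succ,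
    (h i (by omega)).2 (Or.inl rfl), (h j hj).2 (Or.inr rfl)]
  simp only [← add_assoc, CharTwo.add_self_eq_zero, zero_add]

/-- Modulo complement every even matrix is of the form `edgeMat s d`: take `d v` to be the change of
label at the first passage through `v`, which by evenness is also the change at the second. -/
theorem exists_edgeMat_eq (hs : EulerSeq s) (M : Fin 4 → Fin 4 → ZMod 2) (hM : IsEvenMat M) :
    ∃ d c, ∀ i j, edgeMat s d i j = M i j + c := by
  rw [isEvenMat_iff] at hM
  choose p q hpq hq h using hs.exists_positions
  -- `y k` is the label of the edge by which position `k` is entered, cyclically.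
  let y : ℕ → ZMod 2 := fun k =>
    if k = 0 then symmExt M (s 15) (s 16) else symmExt M (s (k - 1)) (s k)
  have hy0 : y 16 = y 0 := by simp [y]
  have hy : ∀ k < 16, symmExt M (s k) (s (k + 1)) = y (k + 1) := by simp [y]
  let d : Fin 4 ⊕ Fin 4 → ZMod 2 := fun v => y (p v) + y (p v + 1)
  have hd : ∀ k < 16, d (s k) = y k + y (k + 1) := by
    intro k hk
    have h1 := hM (s k)
    rw [hs.sum_nbr_eq M y hy0 hy (hpq _) (hq _) (h (s k))] at h1
    rcases (h (s k) k hk).1 rfl with h2 | h2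
    · simp only [d, ← h2]
    · rw [← h2] at h1
      exact CharTwo.add_eq_zero.1 h1
  have hps : ∀ k ≤ 16, partialSum s d k = y k + y 0 := by
    intro k
    induction k with
    | zero => intro _; rw [partialSum_zero, CharTwo.add_self_eq_zero]
    | succ k ih =>
      intro hk
      rw [partialSum_succ, ih (by omega), hd k (by omega)]
      rw [add_right_comm, CharTwo.add_cancel_left]
  refine ⟨d, y 0, fun i j => ?_⟩
  obtain ⟨k, hk, hke⟩ := hs.surj (.inl i) (.inr j) (by simp [K44, completeBipartiteGraph])
  have h1 := hs.symmExt_edgeMat d hk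
  rw [hps _ (by omega), ← hy k hk] at h1
  rcases Sym2.eq_iff.1 hke with ⟨ha, hb⟩ | ⟨ha, hb⟩
  · rw [ha, hb] at h1; exact h1
  · rw [ha, hb] at h1; exact h1

/-- The labels of the four edges at `v` agree iff they do not change at a passage through `v` and the
label leaving the first passage is the label entering the second. -/
theorem isConstAt_edgeMat_iff (hs : EulerSeq s) (d) (v : Fin 4 ⊕ Fin 4) {i j : ℕ} (hij : i < j)
    (hj : j < 16) (h : ∀ k < 16, s k = v ↔ k = i ∨ k = j) :
    IsConstAt (edgeMat s d) v ↔ d v = 0 ∧ partialSum s d (i + 1) = partialSum s d j := by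
  have hper : partialSum s d 16 = partialSum s d 0 := by rw [hs.partialSum_sixteen, partialSum_zero]
  have key : IsConstAt (edgeMat s d) v ↔
      ∃ c, ∀ k < 16, s k = v → partialSum s d k = c ∧ partialSum s d (k + 1) = c := by
    rw [isConstAt_iff]
    refine exists_congr fun c => ⟨fun hc k hk hv => ⟨?_, ?_⟩, fun hc u hu => ?_⟩
    · obtain ⟨l, hl, hle, hls⟩ : ∃ l < 16, partialSum s d k = partialSum s d (l + 1) ∧
          s (l + 1) = v := by
        rcases k with _ | k
        · exact ⟨15, by omega, hper.symm, hs.closed.trans hv⟩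
        · exact ⟨k, by omega, rfl, hv⟩
      rw [hle, ← hs.symmExt_edgeMat d hl, symmExt_comm, hls]
      apply hc
      rw [← hls]
      exact (hs.adj l hl).symm
    · rw [← hs.symmExt_edgeMat d hk, hv]
      apply hc
      rw [← hv]
      exact hs.adj k hk
    · obtain ⟨k, hk, hke⟩ := hs.surj v u hu
      have h1 := hs.symmExt_edgeMat d hk
      rcases Sym2.eq_iff.1 hke with ⟨ha, hb⟩ | ⟨ha, hb⟩
      · rw [← ha, ← hb, h1]
        exact (hc k hk ha).2
      · rw [symmExt_comm, ← ha, ← hb, h1]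
        by_cases hk' : k = 15
        · subst hk'
          rw [hper]
          exact (hc 0 (by omega) (by rw [← hs.closed, hb])).1
        · exact (hc (k + 1) (by omega) hb).1
  have hi' := (h i (by omega)).2 (Or.inl rfl)
  have hj' := (h j hj).2 (Or.inr rfl)
  rw [key]
  constructor
  · rintro ⟨c, hc⟩
    have h1 := hc i (by omega) hi'
    have h2 := hc j hj hj'
    refine ⟨?_, h1.2.trans h2.1.symm⟩
    have h3 := partialSum_succ (s := s) d i
    rw [h1.1, h1.2, hi'] at h3
    simpa using h3
  · rintro ⟨h0, h1⟩
    refine ⟨partialSum s d j, fun k hk hv => ?_⟩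
    rcases (h k hk).1 hv with rfl | rfl
    · refine ⟨?_, h1⟩
      rw [← h1, partialSum_succ, hv, h0, add_zero]
    · refine ⟨rfl, ?_⟩
      rw [partialSum_succ, hv, h0, add_zero]

end EulerSeq

/-! ### Interlacement -/

/-- The vector `A d`, where `A` is the adjacency matrix of `G`. -/
noncomputable def nbrSum (G : SimpleGraph (Fin 4 ⊕ Fin 4)) (d : Fin 4 ⊕ Fin 4 → ZMod 2)
    (v : Fin 4 ⊕ Fin 4) : ZMod 2 :=
  ∑ u, if G.Adj v u then d u else 0

theorem nbrSum_add (G : SimpleGraph (Fin 4 ⊕ Fin 4)) (d e : Fin 4 ⊕ Fin 4 → ZMod 2)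
    (v : Fin 4 ⊕ Fin 4) : nbrSum G (d + e) v = nbrSum G d v + nbrSum G e v := by
  simp only [nbrSum, ← Finset.sum_add_distrib]
  refine Finset.sum_congr rfl fun u _ => ?_
  split_ifs <;> simp

theorem interlaced_iff {x : Fin 4 ⊕ Fin 4} (w : K44.Walk x x) (hlen : w.length = 16)
    (u v : Fin 4 ⊕ Fin 4) :
    Interlaced w.support.dropLast u v ↔ ∃ a b c d : ℕ, a < b ∧ b < c ∧ c < d ∧ d < 16 ∧
      ((w.getVert a = u ∧ w.getVert b = v ∧ w.getVert c = u ∧ w.getVert d = v) ∨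
       (w.getVert a = v ∧ w.getVert b = u ∧ w.getVert c = v ∧ w.getVert d = u)) := by
  have hL : w.support.dropLast.length = 16 := by simp [hlen]
  have hget : ∀ k : Fin w.support.dropLast.length, w.support.dropLast.get k = w.getVert k := by
    intro k
    simp [SimpleGraph.Walk.support_getElem_eq_getVert]
  unfold Interlaced
  simp only [hget]
  constructor
  · rintro ⟨a, b, c, d, hab, hbc, hcd, h⟩
    exact ⟨a, b, c, d, hab, hbc, hcd, hL ▸ d.2, h⟩
  · rintro ⟨a, b, c, d, hab, hbc, hcd, hd, h⟩
    exact ⟨⟨a, by omega⟩, ⟨b, by omega⟩, ⟨c, by omega⟩, ⟨d, by omega⟩, hab, hbc, hcd, h⟩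

theorem interlacement_adj_iff {x : Fin 4 ⊕ Fin 4} (w : K44.Walk x x) (hlen : w.length = 16)
    {u v : Fin 4 ⊕ Fin 4} (huv : v ≠ u) {i j p q : ℕ}
    (hij : i < j) (hj : j < 16) (h : ∀ k < 16, w.getVert k = v ↔ k = i ∨ k = j)
    (hpq : p < q) (hq : q < 16) (h' : ∀ k < 16, w.getVert k = u ↔ k = p ∨ k = q) :
    (interlacement w).Adj v u ↔ (i < p ∧ p < j ∧ j < q) ∨ (p < i ∧ i < q ∧ q < j) := by
  have hi := (h i (by omega)).2 (Or.inl rfl)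
  have hj' := (h j hj).2 (Or.inr rfl)
  have hp := (h' p (by omega)).2 (Or.inl rfl)
  have hq' := (h' q hq).2 (Or.inr rfl)
  rw [interlacement, SimpleGraph.fromRel_adj, interlaced_iff w hlen, interlaced_iff w hlen]
  constructor
  · rintro ⟨-, ⟨a, b, c, d, hab, hbc, hcd, hd, hh⟩ | ⟨a, b, c, d, hab, hbc, hcd, hd, hh⟩⟩ <;>
    · rw [h a (by omega), h b (by omega), h c (by omega), h d (by omega),
        h' a (by omega), h' b (by omega), h' c (by omega), h' d (by omega)] at hh
      omega
  · rintro (⟨h1, h2, h3⟩ | ⟨h1, h2, h3⟩)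
    · exact ⟨huv, Or.inl ⟨i, p, j, q, h1, h2, h3, hq, Or.inl ⟨hi, hp, hj', hq'⟩⟩⟩
    · exact ⟨huv, Or.inl ⟨p, i, q, j, h1, h2, h3, hj, Or.inr ⟨hp, hi, hq', hj'⟩⟩⟩

/-- The vertices interlaced with `v` are those occurring exactly once strictly between the two
occurrences of `v`; a vertex occurring there twice contributes zero in characteristic 2. -/
theorem nbrSum_interlacement {x : Fin 4 ⊕ Fin 4} (w : K44.Walk x x) (hw : w.IsEulerian)
    (d : Fin 4 ⊕ Fin 4 → ZMod 2) {v : Fin 4 ⊕ Fin 4} {i j : ℕ}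
    (hij : i < j) (hj : j < 16) (h : ∀ k < 16, w.getVert k = v ↔ k = i ∨ k = j) :
    nbrSum (interlacement w) d v = ∑ k ∈ Finset.Ico (i + 1) j, d (w.getVert k) := by
  obtain ⟨hlen, hs⟩ := EulerSeq.of_walk w hw
  have h1 : ∀ k, d (w.getVert k) = ∑ u, if w.getVert k = u then d u else 0 := by simp
  simp_rw [h1]
  rw [Finset.sum_comm]
  refine Finset.sum_congr rfl fun u _ => ?_
  rw [← Finset.sum_filter]
  by_cases huv : v = u
  · subst huv
    rw [if_neg (SimpleGraph.irrefl _), Finset.filter_eq_empty_iff.2, Finset.sum_empty]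
    intro k hk hv
    rw [Finset.mem_Ico] at hk
    have := (h k (by omega)).1 hv
    omega
  · obtain ⟨p, q, hpq, hq, h'⟩ := hs.exists_positions u
    have hf : (Finset.Ico (i + 1) j).filter (fun k => w.getVert k = u) =
        (if i < p ∧ p < j then {p} else ∅) ∪ (if i < q ∧ q < j then {q} else ∅) := by
      ext k
      rw [Finset.mem_filter, Finset.mem_Ico, Finset.mem_union]
      constructor
      · rintro ⟨hk, hku⟩
        rcases (h' k (by omega)).1 hku with rfl | rfl
        · left; rw [if_pos (by omega)]; simp
        · right; rw [if_pos (by omega)]; simp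
      · rintro (hk | hk) <;> split_ifs at hk <;> simp at hk <;> subst hk
        · exact ⟨by omega, (h' _ (by omega)).2 (Or.inl rfl)⟩
        · exact ⟨by omega, (h' _ (by omega)).2 (Or.inr rfl)⟩
    rw [hf, Finset.sum_union]
    · have hne : ∀ k < 16, ¬ ((k = i ∨ k = j) ∧ (k = p ∨ k = q)) := by
        rintro k hk ⟨ha, hb⟩
        exact huv (((h k hk).2 ha).symm.trans ((h' k hk).2 hb))
      have n1 := hne i (by omega)
      have n2 := hne j (by omega)
      have hadj := interlacement_adj_iff w hlen huv hij hj h hpq hq h'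
      by_cases hP : i < p ∧ p < j <;> by_cases hQ : i < q ∧ q < j
      · rw [if_neg (by rw [hadj]; omega), if_pos hP, if_pos hQ]
        simp [CharTwo.add_self_eq_zero]
      · rw [if_pos (by rw [hadj]; omega), if_pos hP, if_neg hQ]
        simp
      · rw [if_pos (by rw [hadj]; omega), if_neg hP, if_pos hQ]
        simp
      · rw [if_neg (by rw [hadj]; omega), if_neg hP, if_neg hQ]
        simp
    · split_ifs <;> simp [hpq.ne]

/-- `Φ` identifies the dependencies `(A d, d)` of `IAS(G)`, modulo vertex triples, with even subgraphs of
`K_{4,4}` modulo complement, in such a way that the support of a dependency corresponds to the set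
of nonconstant lines. -/
structure IsCode (G : SimpleGraph (Fin 4 ⊕ Fin 4))
    (Φ : (Fin 4 ⊕ Fin 4 → ZMod 2) → Fin 4 → Fin 4 → ZMod 2) : Prop where
  map_add : ∀ d e, Φ (d + e) = Φ d + Φ e
  even : ∀ d, IsEvenMat (Φ d)
  isConstAt_iff : ∀ d v, IsConstAt (Φ d) v ↔ d v = 0 ∧ nbrSum G d v = 0
  surj : ∀ M, IsEvenMat M → ∃ d c, ∀ i j, Φ d i j = M i j + c

/-- The partial sums of `d` along an Euler circuit encode the isotropic matroid of its interlacement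
graph. -/
theorem exists_isCode {x : Fin 4 ⊕ Fin 4} (w : K44.Walk x x) (hw : w.IsEulerian) :
    ∃ Φ, IsCode (interlacement w) Φ := by
  obtain ⟨hlen, hs⟩ := EulerSeq.of_walk w hw
  refine ⟨EulerSeq.edgeMat w.getVert, EulerSeq.edgeMat_add, hs.isEvenMat_edgeMat, ?_,
    hs.exists_edgeMat_eq⟩
  intro d v
  obtain ⟨i, j, hij, hj, h⟩ := hs.exists_positions v
  rw [hs.isConstAt_edgeMat_iff d v hij hj h, nbrSum_interlacement w hw d hij hj h,
    Finset.sum_Ico_eq_sub _ (by omega : i + 1 ≤ j), sub_eq_zero]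
  exact and_congr_right fun _ => eq_comm

/-! ### Dependencies of the isotropic matroid -/

/-- The coefficient with which column `v` of `I` occurs in the sum of the columns in `S`. -/
noncomputable def coefI (S : Finset ((Fin 4 ⊕ Fin 4) × Fin 3)) (v : Fin 4 ⊕ Fin 4) : ZMod 2 :=
  (if (v, 0) ∈ S then 1 else 0) + (if (v, 2) ∈ S then 1 else 0)

/-- The coefficient with which column `v` of `A` occurs in the sum of the columns in `S`. -/
noncomputable def coefA (S : Finset ((Fin 4 ⊕ Fin 4) × Fin 3)) (v : Fin 4 ⊕ Fin 4) : ZMod 2 :=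
  (if (v, 1) ∈ S then 1 else 0) + (if (v, 2) ∈ S then 1 else 0)

/-- The columns of `IAS(G)` in `S` sum to zero; over GF(2) the circuits are the minimal nonempty such
sets. -/
def IsCycle (G : SimpleGraph (Fin 4 ⊕ Fin 4)) (S : Finset ((Fin 4 ⊕ Fin 4) × Fin 3)) : Prop :=
  ∑ p ∈ S, iasCol G p = 0

theorem sum_iasCol (G : SimpleGraph (Fin 4 ⊕ Fin 4)) (S : Finset ((Fin 4 ⊕ Fin 4) × Fin 3))
    (v : Fin 4 ⊕ Fin 4) :
    (∑ p ∈ S, iasCol G p) v = coefI S v + nbrSum G (coefA S) v := by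
  rw [Finset.sum_apply, ← Finset.univ_inter S, ← Finset.sum_ite_mem, Fintype.sum_prod_type]
  simp only [Fin.sum_univ_three, iasCol, Finset.univ_inter]
  have h1 : coefI S v = ∑ u, if v = u then coefI S u else 0 := by simp
  rw [h1, nbrSum, ← Finset.sum_add_distrib]
  refine Finset.sum_congr rfl fun u _ => ?_
  by_cases h0 : (u, 0) ∈ S <;> by_cases h1 : (u, 1) ∈ S <;> by_cases h2 : (u, 2) ∈ S <;>
    by_cases hv : v = u <;> by_cases hA : G.Adj v u <;>
    simp [h0, h1, h2, hv, hA, coefI, coefA]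

theorem isCycle_iff (G : SimpleGraph (Fin 4 ⊕ Fin 4)) (S : Finset ((Fin 4 ⊕ Fin 4) × Fin 3)) :
    IsCycle G S ↔ ∀ v, coefI S v = nbrSum G (coefA S) v := by
  rw [IsCycle, funext_iff]
  refine forall_congr' fun v => ?_
  rw [sum_iasCol, Pi.zero_apply, CharTwo.add_eq_zero]

theorem not_iasIndep_iff (G : SimpleGraph (Fin 4 ⊕ Fin 4))
    (S : Finset ((Fin 4 ⊕ Fin 4) × Fin 3)) :
    ¬ IasIndep G S ↔ ∃ D ⊆ S, D.Nonempty ∧ IsCycle G D := by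
  have h : IasIndep G S ↔ LinearIndepOn (ZMod 2) (iasCol G) (S : Set _) := Iff.rfl
  rw [h, linearIndepOn_finset_iff]
  push Not
  constructor
  · rintro ⟨f, hf, p, hp, hfp⟩
    refine ⟨S.filter fun p => f p ≠ 0, Finset.filter_subset _ _,
      ⟨p, Finset.mem_filter.2 ⟨hp, hfp⟩⟩, ?_⟩
    rw [IsCycle, Finset.sum_filter]
    refine (Finset.sum_congr rfl fun p _ => ?_).trans hf
    have h01 : ∀ a : ZMod 2, a ≠ 0 → a = 1 := by decide
    split_ifs with h0
    · rw [h01 _ h0, one_smul]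
    · rw [not_not.1 h0, zero_smul]
  · rintro ⟨D, hD, ⟨p, hp⟩, hc⟩
    refine ⟨fun p => if p ∈ D then 1 else 0, ?_, p, hD hp, by simp [hp]⟩
    simp only [ite_smul, one_smul, zero_smul]
    rw [Finset.sum_ite_mem, Finset.inter_eq_right.2 hD]
    exact hc

theorem IasCircuit.isCycle {G : SimpleGraph (Fin 4 ⊕ Fin 4)}
    {C : Finset ((Fin 4 ⊕ Fin 4) × Fin 3)} (hC : IasCircuit G C) : C.Nonempty ∧ IsCycle G C := by
  obtain ⟨D, hD, hne, hc⟩ := (not_iasIndep_iff G C).1 hC.1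
  rcases hD.eq_or_ssubset with rfl | h
  · exact ⟨hne, hc⟩
  · exact absurd (hC.2 D h) ((not_iasIndep_iff G D).2 ⟨D, subset_rfl, hne, hc⟩)

theorem IasCircuit.eq_of_subset {G : SimpleGraph (Fin 4 ⊕ Fin 4)}
    {C D : Finset ((Fin 4 ⊕ Fin 4) × Fin 3)} (hC : IasCircuit G C) (hDC : D ⊆ C)
    (hne : D.Nonempty) (hD : IsCycle G D) : D = C := by
  by_contra h
  exact (not_iasIndep_iff G D).2 ⟨D, subset_rfl, hne, hD⟩ (hC.2 D (hDC.ssubset_of_ne h))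

theorem isCycle_triple (G : SimpleGraph (Fin 4 ⊕ Fin 4)) (v : Fin 4 ⊕ Fin 4) :
    IsCycle G ({(v, 0), (v, 1), (v, 2)} : Finset ((Fin 4 ⊕ Fin 4) × Fin 3)) := by
  rw [isCycle_iff]
  have hA : coefA ({(v, 0), (v, 1), (v, 2)} : Finset ((Fin 4 ⊕ Fin 4) × Fin 3)) = 0 := by
    funext u
    by_cases h : u = v <;> simp [coefA, h, CharTwo.add_self_eq_zero]
  intro u
  rw [hA]
  by_cases h : u = v <;> simp [coefI, nbrSum, h, CharTwo.add_self_eq_zero]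

theorem IsSubtransversal.mono {S T : Finset ((Fin 4 ⊕ Fin 4) × Fin 3)}
    (hT : IsSubtransversal T) (h : S ⊆ T) : IsSubtransversal S :=
  fun v i j hi hj => hT v i j (h hi) (h hj)

theorem IsTransversal.isSubtransversal {T : Finset ((Fin 4 ⊕ Fin 4) × Fin 3)}
    (hT : IsTransversal T) : IsSubtransversal T :=
  fun v _ _ hi hj => (hT v).unique hi hj

theorem isSubtransversal_iff_injOn (S : Finset ((Fin 4 ⊕ Fin 4) × Fin 3)) :
    IsSubtransversal S ↔ Set.InjOn Prod.fst (S : Set ((Fin 4 ⊕ Fin 4) × Fin 3)) := by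
  constructor
  · rintro h ⟨v, i⟩ hi ⟨u, j⟩ hj (rfl : v = u)
    rw [h v i j hi hj]
  · intro h v i j hi hj
    exact congrArg Prod.snd (h hi hj rfl)

theorem IsSubtransversal.card_image {S : Finset ((Fin 4 ⊕ Fin 4) × Fin 3)}
    (hS : IsSubtransversal S) : (S.image Prod.fst).card = S.card :=
  Finset.card_image_of_injOn ((isSubtransversal_iff_injOn S).1 hS)

theorem mem_image_fst_iff (S : Finset ((Fin 4 ⊕ Fin 4) × Fin 3)) (v : Fin 4 ⊕ Fin 4) :
    v ∈ S.image Prod.fst ↔ (v, 0) ∈ S ∨ (v, 1) ∈ S ∨ (v, 2) ∈ S := by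
  rw [Finset.mem_image]
  constructor
  · rintro ⟨⟨u, i⟩, h, rfl⟩
    fin_cases i
    · exact Or.inl h
    · exact Or.inr (Or.inl h)
    · exact Or.inr (Or.inr h)
  · rintro (h | h | h) <;> exact ⟨_, h, rfl⟩

/-- The subtransversal whose columns sum to zero with coefficient vectors `A d` on `I` and `d` on `A`:
the pairs `(1, 0)`, `(0, 1)`, `(1, 1)` of coefficients at `v` select `φ(v)`, `χ(v)`, `ψ(v)`. -/
noncomputable def codeSet (G : SimpleGraph (Fin 4 ⊕ Fin 4)) (d : Fin 4 ⊕ Fin 4 → ZMod 2) :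
    Finset ((Fin 4 ⊕ Fin 4) × Fin 3) :=
  Finset.univ.filter fun p => (nbrSum G d p.1, d p.1) = ![(1, 0), (0, 1), (1, 1)] p.2

theorem zmod_two_cases (a : ZMod 2) : a = 0 ∨ a = 1 := by
  revert a; decide

theorem coefA_codeSet (G : SimpleGraph (Fin 4 ⊕ Fin 4)) (d : Fin 4 ⊕ Fin 4 → ZMod 2) :
    coefA (codeSet G d) = d := by
  funext v
  rcases zmod_two_cases (nbrSum G d v) with h | h <;> rcases zmod_two_cases (d v) with h' | h' <;>
    simp [coefA, codeSet, h, h']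

theorem coefI_codeSet (G : SimpleGraph (Fin 4 ⊕ Fin 4)) (d : Fin 4 ⊕ Fin 4 → ZMod 2) :
    coefI (codeSet G d) = nbrSum G d := by
  funext v
  rcases zmod_two_cases (nbrSum G d v) with h | h <;> rcases zmod_two_cases (d v) with h' | h' <;>
    simp [coefI, codeSet, h, h']

theorem isCycle_codeSet (G : SimpleGraph (Fin 4 ⊕ Fin 4)) (d : Fin 4 ⊕ Fin 4 → ZMod 2) :
    IsCycle G (codeSet G d) := by
  rw [isCycle_iff, coefA_codeSet, coefI_codeSet]
  exact fun _ => rfl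

theorem isSubtransversal_codeSet (G : SimpleGraph (Fin 4 ⊕ Fin 4))
    (d : Fin 4 ⊕ Fin 4 → ZMod 2) : IsSubtransversal (codeSet G d) := by
  intro v i j hi hj
  simp only [codeSet, Finset.mem_filter, Finset.mem_univ, true_and] at hi hj
  have hinj : ∀ i j : Fin 3, (![(1, 0), (0, 1), (1, 1)] i : ZMod 2 × ZMod 2) =
    ![(1, 0), (0, 1), (1, 1)] j → i = j := by decide
  exact hinj i j (hi.symm.trans hj)

/-- At a vertex where `codeSet G d` and `S` have the same coefficients they have the same elements. -/
theorem IsSubtransversal.mem_of_mem_codeSet {G : SimpleGraph (Fin 4 ⊕ Fin 4)}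
    {d : Fin 4 ⊕ Fin 4 → ZMod 2} {S : Finset ((Fin 4 ⊕ Fin 4) × Fin 3)}
    (hS : IsSubtransversal S) {v : Fin 4 ⊕ Fin 4} (hA : d v = coefA S v)
    (hI : nbrSum G d v = coefI S v) {i : Fin 3} (h : (v, i) ∈ codeSet G d) : (v, i) ∈ S := by
  simp only [codeSet, Finset.mem_filter, Finset.mem_univ, true_and, hA, hI, coefI, coefA] at h
  have h01 := hS v 0 1
  have h02 := hS v 0 2
  have h12 := hS v 1 2
  by_cases h0 : (v, 0) ∈ S <;> by_cases h1 : (v, 1) ∈ S <;> by_cases h2 : (v, 2) ∈ S <;>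
    fin_cases i <;> simp_all

theorem exists_isTransversal {S : Finset ((Fin 4 ⊕ Fin 4) × Fin 3)} (hS : IsSubtransversal S) :
    ∃ T, IsTransversal T ∧ S ⊆ T := by
  refine ⟨S ∪ Finset.univ.filter (fun p => p.2 = 0 ∧ ∀ i, (p.1, i) ∉ S), fun v => ?_,
    Finset.subset_union_left⟩
  by_cases h : ∃ i, (v, i) ∈ S
  · obtain ⟨i, hi⟩ := h
    refine ⟨i, Finset.mem_union_left _ hi, fun j hj => ?_⟩
    rcases Finset.mem_union.1 hj with hj | hj
    · exact hS v j i hj hi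
    · exact absurd hi ((Finset.mem_filter.1 hj).2.2 i)
  · push Not at h
    refine ⟨0, by simp [h], fun j hj => ?_⟩
    rcases Finset.mem_union.1 hj with hj | hj
    · exact absurd hj (h j)
    · exact (Finset.mem_filter.1 hj).2.1

/-! ### Circuits and even matrices -/

namespace IsCode

variable {G : SimpleGraph (Fin 4 ⊕ Fin 4)}
  {Φ : (Fin 4 ⊕ Fin 4 → ZMod 2) → Fin 4 → Fin 4 → ZMod 2}
  {S : Finset ((Fin 4 ⊕ Fin 4) × Fin 3)}

/-- The line at `v` is constant iff `S` contains all or none of the vertex triple of `v`. -/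
theorem isConstAt_coefA_iff (hΦ : IsCode G Φ) (hS : IsCycle G S) (v : Fin 4 ⊕ Fin 4) :
    IsConstAt (Φ (coefA S)) v ↔
      ((v, 0) ∈ S ↔ (v, 2) ∈ S) ∧ ((v, 1) ∈ S ↔ (v, 2) ∈ S) := by
  rw [hΦ.isConstAt_iff, ← (isCycle_iff G S).1 hS]
  by_cases h0 : (v, 0) ∈ S <;> by_cases h1 : (v, 1) ∈ S <;> by_cases h2 : (v, 2) ∈ S <;>
    simp [coefA, coefI, h0, h1, h2, CharTwo.add_self_eq_zero]

/-- A set of columns with sum zero is a union of vertex triples or meets at least four of them. -/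
theorem triples_or_four_le (hΦ : IsCode G Φ) (hS : IsCycle G S) :
    (∀ v, ((v, 0) ∈ S ↔ (v, 2) ∈ S) ∧ ((v, 1) ∈ S ↔ (v, 2) ∈ S)) ∨
      4 ≤ (S.image Prod.fst).card := by
  rcases (hΦ.even (coefA S)).const_or_weight with h | h
  · exact Or.inl fun v => (hΦ.isConstAt_coefA_iff hS v).1 (h v)
  · refine Or.inr (h.trans (Finset.card_le_card fun v hv => ?_))
    rw [Finset.mem_filter, hΦ.isConstAt_coefA_iff hS] at hv
    rw [mem_image_fst_iff]
    tauto

theorem exists_triple_or_four_le (hΦ : IsCode G Φ) (hS : IsCycle G S) (hne : S.Nonempty) :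
    (∃ v, ({(v, 0), (v, 1), (v, 2)} : Finset ((Fin 4 ⊕ Fin 4) × Fin 3)) ⊆ S) ∨
      4 ≤ (S.image Prod.fst).card := by
  refine (hΦ.triples_or_four_le hS).imp_left fun h => ?_
  obtain ⟨p, hp⟩ := hne
  have hv := (mem_image_fst_iff S p.1).1 (Finset.mem_image_of_mem _ hp)
  refine ⟨p.1, ?_⟩
  have := h p.1
  simp only [Finset.insert_subset_iff, Finset.singleton_subset_iff]
  tauto

theorem four_le_card (hΦ : IsCode G Φ) (hS : IsCycle G S) (hne : S.Nonempty)
    (hsub : IsSubtransversal S) : 4 ≤ S.card := by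
  rcases hΦ.exists_triple_or_four_le hS hne with ⟨v, hv⟩ | h
  · simp only [Finset.insert_subset_iff, Finset.singleton_subset_iff] at hv
    exact absurd (hsub v 0 1 hv.1 hv.2.1) (by decide)
  · exact hsub.card_image ▸ h

theorem isConstAt_iff_notMem (hΦ : IsCode G Φ) (hS : IsCycle G S) (hsub : IsSubtransversal S)
    (v : Fin 4 ⊕ Fin 4) : IsConstAt (Φ (coefA S)) v ↔ v ∉ S.image Prod.fst := by
  rw [hΦ.isConstAt_coefA_iff hS, mem_image_fst_iff]
  have h01 := hsub v 0 1
  have h02 := hsub v 0 2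
  have h12 := hsub v 1 2
  by_cases h0 : (v, 0) ∈ S <;> by_cases h1 : (v, 1) ∈ S <;> by_cases h2 : (v, 2) ∈ S <;>
    simp_all

theorem weight_eq_card (hΦ : IsCode G Φ) (hS : IsCycle G S) (hsub : IsSubtransversal S) :
    weight (Φ (coefA S)) = S.card := by
  rw [← hsub.card_image, weight]
  congr 1
  ext v
  rw [Finset.mem_filter, hΦ.isConstAt_iff_notMem hS hsub]
  simp only [Finset.mem_univ, true_and, not_not]

theorem iasCircuit_of_card_eq_four (hΦ : IsCode G Φ) (hS : IsCycle G S)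
    (hsub : IsSubtransversal S) (hcard : S.card = 4) : IasCircuit G S := by
  refine ⟨(not_iasIndep_iff G S).2 ⟨S, subset_rfl, Finset.card_pos.1 (by omega), hS⟩, ?_⟩
  intro D hD
  by_contra hdep
  obtain ⟨D', hD', hne, hc⟩ := (not_iasIndep_iff G D).1 hdep
  have h4 := hΦ.four_le_card hc hne (hsub.mono (hD'.trans hD.subset))
  have := Finset.card_lt_card (hD'.trans_ssubset hD)
  omega

theorem iasCircuit_codeSet (hΦ : IsCode G Φ) {d : Fin 4 ⊕ Fin 4 → ZMod 2}
    (hd : weight (Φ d) = 4) : IasCircuit G (codeSet G d) ∧ (codeSet G d).card = 4 := by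
  have h := hΦ.weight_eq_card (isCycle_codeSet G d) (isSubtransversal_codeSet G d)
  rw [coefA_codeSet, hd] at h
  exact ⟨hΦ.iasCircuit_of_card_eq_four (isCycle_codeSet G d) (isSubtransversal_codeSet G d)
    h.symm, h.symm⟩

/-- Every even matrix is, modulo complement, the code of some `d`. -/
theorem exists_lift (hΦ : IsCode G Φ) {M : Fin 4 → Fin 4 → ZMod 2} (hM : IsEvenMat M) :
    ∃ d, (∃ c, ∀ i j, Φ d i j = M i j + c) ∧ weight (Φ d) = weight M := by
  obtain ⟨d, c, h⟩ := hΦ.surj M hM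
  refine ⟨d, ⟨c, h⟩, ?_⟩
  simp only [weight, isConstAt_add_const M (Φ d) c h]

/-- Two disjoint circuits in a transversal have at least four elements each, so exactly four, and their
codes have complementary sets of nonconstant lines. The six matrices provided by `exists_six` are
codes of distinct circuits contained in `C₁ ∪ C₂`, since at each line they agree up to a constant
with `0` or with the code of `C₁ ∪ C₂`. -/
theorem six_circuits (hΦ : IsCode G Φ) {T C₁ C₂ : Finset ((Fin 4 ⊕ Fin 4) × Fin 3)}
    (hT : IsTransversal T) (h₁ : IasCircuit G C₁) (h₂ : IasCircuit G C₂)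
    (hC₁ : C₁ ⊆ T) (hC₂ : C₂ ⊆ T) (hdisj : Disjoint C₁ C₂) :
    C₁.card = 4 ∧ C₂.card = 4 ∧
      6 ≤ Set.ncard {C : Finset ((Fin 4 ⊕ Fin 4) × Fin 3) |
        IasCircuit G C ∧ C ⊆ T ∧ C.card = 4} := by
  have hTs := hT.isSubtransversal
  have hs₁ := hTs.mono hC₁
  have hs₂ := hTs.mono hC₂
  have hU : C₁ ∪ C₂ ⊆ T := Finset.union_subset hC₁ hC₂
  have hsU := hTs.mono hU
  have hle₁ := hΦ.four_le_card h₁.isCycle.2 h₁.isCycle.1 hs₁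
  have hle₂ := hΦ.four_le_card h₂.isCycle.2 h₂.isCycle.1 hs₂
  have hUcard := Finset.card_union_of_disjoint hdisj
  have hUle : (C₁ ∪ C₂).card ≤ 8 := by
    rw [← hsU.card_image]
    exact (Finset.card_le_univ _).trans (by simp)
  have hc₁ : C₁.card = 4 := by omega
  have hc₂ : C₂.card = 4 := by omega
  refine ⟨hc₁, hc₂, ?_⟩
  have himg : (C₁ ∪ C₂).image Prod.fst = Finset.univ := by
    rw [← Finset.card_eq_iff_eq_univ, hsU.card_image, hUcard, hc₁, hc₂]
    simp
  have hcompl : ∀ v, IsConstAt (Φ (coefA C₂)) v ↔ ¬ IsConstAt (Φ (coefA C₁)) v := by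
    intro v
    rw [hΦ.isConstAt_iff_notMem h₁.isCycle.2 hs₁, hΦ.isConstAt_iff_notMem h₂.isCycle.2 hs₂,
      not_not]
    constructor
    · intro hv
      have : v ∈ (C₁ ∪ C₂).image Prod.fst := himg ▸ Finset.mem_univ v
      rw [Finset.image_union, Finset.mem_union] at this
      tauto
    · intro hv hv'
      obtain ⟨⟨_, i⟩, hi, rfl⟩ := Finset.mem_image.1 hv
      obtain ⟨⟨_, j⟩, hj, rfl⟩ := Finset.mem_image.1 hv'
      obtain rfl := hTs _ i j (hC₁ hi) (hC₂ hj)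
      exact Finset.disjoint_left.1 hdisj hi hj
  obtain ⟨S, hSe, hSw, hSc, hSinj⟩ := exists_six (hΦ.even (coefA C₁)) (hΦ.even (coefA C₂))
    ((hΦ.weight_eq_card h₁.isCycle.2 hs₁).trans hc₁)
    ((hΦ.weight_eq_card h₂.isCycle.2 hs₂).trans hc₂) hcompl
  -- `d k` encodes the `k`-th of the six circuits.
  choose d hdc hdw using fun k => hΦ.exists_lift (hSe k)
  have hAU : ∀ v, coefA (C₁ ∪ C₂) v = coefA C₁ v + coefA C₂ v ∧
      coefI (C₁ ∪ C₂) v = coefI C₁ v + coefI C₂ v := by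
    intro v
    have hd : ∀ i, (v, i) ∈ C₁ → (v, i) ∉ C₂ := fun i hi => Finset.disjoint_left.1 hdisj hi
    have hadd : ∀ i : Fin 3, (if (v, i) ∈ C₁ ∪ C₂ then (1 : ZMod 2) else 0) =
        (if (v, i) ∈ C₁ then 1 else 0) + (if (v, i) ∈ C₂ then 1 else 0) := by
      intro i
      have := hd i
      by_cases ha : (v, i) ∈ C₁ <;> by_cases hb : (v, i) ∈ C₂ <;> simp_all
    simp only [coefA, coefI, hadd]
    constructor <;> ring
  have hsub : ∀ k, codeSet G (d k) ⊆ T := by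
    rintro k ⟨v, i⟩ hi
    apply hU
    have hnc : ¬ IsConstAt (Φ (d k)) v := by
      rw [← coefA_codeSet G (d k), hΦ.isConstAt_iff_notMem (isCycle_codeSet G (d k))
        (isSubtransversal_codeSet G (d k)), not_not]
      exact Finset.mem_image_of_mem Prod.fst hi
    obtain ⟨c, hc⟩ := hdc k
    have hcon : IsConstAt (Φ (d k + (coefA C₁ + coefA C₂))) v := by
      rw [hΦ.map_add, hΦ.map_add,
        isConstAt_add_const (S k + (Φ (coefA C₁) + Φ (coefA C₂))) _ c]
      · refine (hSc k v).resolve_left fun h => hnc ?_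
        rwa [isConstAt_add_const (S k) _ c hc]
      · intro i j
        simp only [Pi.add_apply, hc]
        ring
    rw [hΦ.isConstAt_iff, nbrSum_add, nbrSum_add, Pi.add_apply, Pi.add_apply,
      ← (isCycle_iff G C₁).1 h₁.isCycle.2, ← (isCycle_iff G C₂).1 h₂.isCycle.2,
      ← (hAU v).1, ← (hAU v).2, CharTwo.add_eq_zero, CharTwo.add_eq_zero] at hcon
    exact hsU.mem_of_mem_codeSet hcon.1 hcon.2 hi
  have hinj : Function.Injective fun k => codeSet G (d k) := by
    intro k l hkl
    have hdd : d k = d l := by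
      rw [← coefA_codeSet G (d k), ← coefA_codeSet G (d l)]
      exact congrArg coefA hkl
    obtain ⟨c, hc⟩ := hdc k
    obtain ⟨c', hc'⟩ := hdc l
    refine hSinj k l ⟨c' + c, fun i j => ?_⟩
    have h := hc i j
    rw [hdd, hc'] at h
    rw [← add_assoc, h, add_assoc, CharTwo.add_self_eq_zero, add_zero]
  have hrange : Set.range (fun k => codeSet G (d k)) ⊆
      {C | IasCircuit G C ∧ C ⊆ T ∧ C.card = 4} := by
    rintro _ ⟨k, rfl⟩
    have h := hΦ.iasCircuit_codeSet ((hdw k).trans (hSw k))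
    exact ⟨h.1, hsub k, h.2⟩
  calc 6 = Set.ncard (Set.range fun k => codeSet G (d k)) := by
        rw [← Set.image_univ, Set.ncard_image_of_injective _ hinj, Set.ncard_univ]
        simp
    _ ≤ _ := Set.ncard_le_ncard hrange (Set.toFinite _)

theorem exists_transverseCircuit (hΦ : IsCode G Φ) :
    ∃ C, TransverseCircuit G C ∧ C.card = 4 := by
  -- `M` is the edge set of a 4-cycle, which meets exactly four vertices.
  let M : Fin 4 → Fin 4 → ZMod 2 := completion 1 1 0 1 1 0 0 0 0
  have hM : IsEvenMat M := ⟨by decide, by decide⟩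
  have hw : weight M = 4 := by decide
  obtain ⟨d, -, hd⟩ := hΦ.exists_lift hM
  have h := hΦ.iasCircuit_codeSet (hd.trans hw)
  exact ⟨_, ⟨h.1, exists_isTransversal (isSubtransversal_codeSet G d)⟩, h.2⟩

end IsCode

/-- For the interlacement graph `G` of an Euler circuit of `K_{4,4}`:
(i) every circuit of `M[IAS(G)]` of size ≤ 3 is a vertex triple; (ii) every circuit of
size 4 is a subtransversal, and the smallest transverse circuits have size exactly 4;
(iii) if a transverse matroid of `G` contains two disjoint circuits then both have size 4
and that transverse matroid contains at least six circuits of size 4. -/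
theorem K44_interlacement_circuits {x : Fin 4 ⊕ Fin 4} (w : K44.Walk x x)
    (hw : w.IsEulerian) :
    (∀ C, IasCircuit (interlacement w) C → C.card ≤ 3 →
        ∃ v, C = ({(v, 0), (v, 1), (v, 2)} : Finset ((Fin 4 ⊕ Fin 4) × Fin 3))) ∧
    (∀ C, IasCircuit (interlacement w) C → C.card = 4 → IsSubtransversal C) ∧
    (∀ C, TransverseCircuit (interlacement w) C → 4 ≤ C.card) ∧
    (∃ C, TransverseCircuit (interlacement w) C ∧ C.card = 4) ∧
    (∀ T, IsTransversal T → ∀ C₁ C₂, IasCircuit (interlacement w) C₁ →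
        IasCircuit (interlacement w) C₂ → C₁ ⊆ T → C₂ ⊆ T → Disjoint C₁ C₂ →
        C₁.card = 4 ∧ C₂.card = 4 ∧
          6 ≤ Set.ncard {C : Finset ((Fin 4 ⊕ Fin 4) × Fin 3) |
                IasCircuit (interlacement w) C ∧ C ⊆ T ∧ C.card = 4}) := by
  obtain ⟨Φ, hΦ⟩ := exists_isCode w hw
  refine ⟨fun C hC hcard => ?_, fun C hC hcard => ?_, fun C hC => ?_,
    hΦ.exists_transverseCircuit, fun T hT C₁ C₂ h₁ h₂ hC₁ hC₂ hdisj =>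
      hΦ.six_circuits hT h₁ h₂ hC₁ hC₂ hdisj⟩
  · rcases hΦ.exists_triple_or_four_le hC.isCycle.2 hC.isCycle.1 with ⟨v, hv⟩ | h
    · exact ⟨v, (hC.eq_of_subset hv (by simp) (isCycle_triple _ v)).symm⟩
    · have := (Finset.card_image_le (s := C) (f := Prod.fst))
      omega
  · rcases hΦ.exists_triple_or_four_le hC.isCycle.2 hC.isCycle.1 with ⟨v, hv⟩ | h
    · rw [← hC.eq_of_subset hv (by simp) (isCycle_triple _ v)] at hcard
      simp at hcard
    · rw [isSubtransversal_iff_injOn]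
      exact Finset.card_image_iff.1 (le_antisymm Finset.card_image_le (hcard.le.trans h))
  · obtain ⟨hcirc, T, hT, hCT⟩ := hC
    exact hΦ.four_le_card hcirc.isCycle.2 hcirc.isCycle.1 (hT.isSubtransversal.mono hCT)
end

section
/- For every Euler circuit C of K_{4,4}, the interlacement graph of C has diameter at most 2; that is, any two distinct vertices of the interlacement graph are adjacent or have a common neighbor. -/
/-!
The automorphism group of `K_{4,4}` acts transitively on trails `a₀ b₀ a₁ b₁` with three edges, so
the vertices can be numbered `0, …, 7`, one side by `0, …, 3` and the other by `4, …, 7`, in such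
a way that the Euler circuit starts with `0, 4, 1, 5` (`exists_numbering`). Only 352 trails of
length 16 start in this way. `search` enumerates them and tests, for every pair of numbers, that
they are interlaced or have a common interlacing partner; `search_init` is the outcome of this
enumeration. `trailFrom_of_isTrail` shows that every Euler circuit is among the enumerated trails,
and `interlaced_of_testBit` carries the result back from numbers to vertices.
-/

open scoped Classical

namespace K44Search

/-! ### The enumeration -/

/-- A number standing for the unordered pair `{a, b}` of numbers below 8. -/
def edgeCode (a b : ℕ) : ℕ := if a < b then 8 * a + b else 8 * b + a

/-- The set of entries of a list, as a bit mask. -/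
def mask : List ℕ → ℕ
  | [] => 0
  | x :: l => 1 <<< x ||| mask l

/-- Given the masks `out` of the letters before the first occurrence of `a` and `ins` of the letters
read since then, the mask of the letters that occur both between the first two occurrences of `a`
and outside of them. -/
def nbrsAux (a out : ℕ) : List ℕ → ℕ → ℕ
  | [], _ => 0
  | x :: l, ins => bif Nat.beq x a then ins &&& (out ||| mask l) else nbrsAux a out l (ins ||| 1 <<< x)

/-- The mask of the letters interlaced with `a` in a word, where `out` is the mask of the letters
read so far, none of them `a`. -/
def nbrs (a : ℕ) : List ℕ → ℕ → ℕ
  | [], _ => 0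
  | x :: l, out => bif Nat.beq x a then nbrsAux a out l 0 else nbrs a l (out ||| 1 <<< x)

/-- Any two numbers `a` and `b` below 8 are interlaced in `s` or have a common partner: the
neighbourhood of `a` meets the closed neighbourhood of `b`. -/
def good (s : List ℕ) : Bool :=
  (List.range 8).all fun a => (List.range 8).all fun b =>
    Nat.blt 0 (nbrs a s 0 &&& (1 <<< b ||| nbrs b s 0))

/-- Starting at the vertex `a`, the list of vertices is the rest of a trail in the copy of `K_{4,4}`
with sides `{0, …, 3}` and `{4, …, 7}` that avoids the edges in `used`. -/
def TrailFrom : ℕ → List ℕ → List ℕ → Prop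
  | _, _, [] => True
  | a, used, b :: l =>
    b < 8 ∧ decide (a < 4) ≠ decide (b < 4) ∧ edgeCode a b ∉ used ∧
      TrailFrom b (edgeCode a b :: used) l

/-- Depth-first search: all trails that continue the walk with reversed vertex sequence `acc`,
current vertex `a` and set of edges `used` by `n` further steps have a good word. The last vertex
of the completed closed walk repeats the first one and is dropped. -/
def search : ℕ → ℕ → List ℕ → List ℕ → Bool
  | 0, _, _, acc => good acc.reverse.dropLast
  | n + 1, a, used, acc => (List.range 8).all fun b =>
      decide (a < 4) == decide (b < 4) || used.elem (edgeCode a b) ||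
        search n b (edgeCode a b :: used) (b :: acc)

theorem search_sound (n : ℕ) : ∀ (a : ℕ) (used acc l : List ℕ), search n a used acc = true →
    l.length = n → TrailFrom a used l → good (acc.reverse ++ l).dropLast = true := by
  induction n with
  | zero =>
    intro a used acc l h hl _
    obtain rfl := List.length_eq_zero_iff.mp hl
    simpa [search] using h
  | succ n ih =>
    intro a used acc l h hl ht
    match l, hl, ht with
    | b :: l, hl, ⟨hb, hab, hu, ht⟩ =>
      have h1 := List.all_eq_true.mp h b (List.mem_range.mpr hb)
      have h2 : search n b (edgeCode a b :: used) (b :: acc) = true := by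
        simp only [Bool.or_eq_true, beq_iff_eq, List.elem_eq_mem, decide_eq_true_eq] at h1
        tauto
      simpa using ih b _ _ l h2 (by simpa using hl) ht

theorem search_init :
    search 13 5 [edgeCode 1 5, edgeCode 4 1, edgeCode 0 4] [5, 1, 4, 0] = true := by
  decide +kernel

/-! ### Numberings of the vertices -/

/-- A numbering of the vertices of `K_{4,4}` by `0, …, 7` that puts the sides on `{0, …, 3}` and
`{4, …, 7}`, in either order. -/
structure IsNumbering (c : Fin 4 ⊕ Fin 4 → ℕ) : Prop where
  inj : Function.Injective c
  lt : ∀ v, c v < 8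
  side : ∀ u v, K44.Adj u v → decide (c u < 4) ≠ decide (c v < 4)

theorem IsNumbering.edgeCode_inj {c : Fin 4 ⊕ Fin 4 → ℕ} (hc : IsNumbering c)
    {u v u' v' : Fin 4 ⊕ Fin 4} (h : edgeCode (c u) (c v) = edgeCode (c u') (c v')) :
    s(u, v) = s(u', v') := by
  have h1 := hc.lt u
  have h2 := hc.lt v
  have h3 := hc.lt u'
  have h4 := hc.lt v'
  have : (c u = c u' ∧ c v = c v') ∨ (c u = c v' ∧ c v = c u') := by
    unfold edgeCode at h
    split_ifs at h <;> omega
  rw [Sym2.eq_iff]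
  exact this.imp (And.imp (@hc.inj _ _) (@hc.inj _ _)) (And.imp (@hc.inj _ _) (@hc.inj _ _))

/-- A walk that is a trail gives a trail of numbers. In the induction `used` collects the edges
already passed, none of which the rest of the walk uses again. -/
theorem trailFrom_of_isTrail {c : Fin 4 ⊕ Fin 4 → ℕ} (hc : IsNumbering c)
    {x y : Fin 4 ⊕ Fin 4} (w : K44.Walk x y) : ∀ used : List ℕ, w.edges.Nodup →
    (∀ u v, s(u, v) ∈ w.edges → edgeCode (c u) (c v) ∉ used) →
    TrailFrom (c x) used (w.support.tail.map c) := by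
  induction w with
  | nil => intro _ _ _; trivial
  | @cons x y z h p ih =>
    intro used hn hu
    rw [SimpleGraph.Walk.edges_cons, List.nodup_cons] at hn
    have hs : (SimpleGraph.Walk.cons h p).support.tail.map c
        = c y :: p.support.tail.map c := by
      rw [SimpleGraph.Walk.support_cons, List.tail_cons, ← List.map_cons,
        SimpleGraph.Walk.cons_tail_support]
    rw [hs]
    refine ⟨hc.lt y, hc.side _ _ h, hu _ _ (by simp), ih _ hn.2 ?_⟩
    intro u v huv hmem
    rcases List.mem_cons.mp hmem with he | hm
    · exact hn.1 (hc.edgeCode_inj he ▸ huv)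
    · exact hu u v (by simp [huv]) hm

theorem exists_perm : ∀ i j : Fin 4, i ≠ j → ∃ σ : Equiv.Perm (Fin 4), σ i = 0 ∧ σ j = 1 := by
  intro i j hij
  refine ⟨(Equiv.swap 0 i).trans (Equiv.swap 1 (Equiv.swap 0 i j)), ?_⟩
  revert i j
  decide

/-- The start of a trail can be numbered `0, 4, 1, 5`. -/
theorem exists_numbering {a₀ b₀ a₁ b₁ : Fin 4 ⊕ Fin 4} (h1 : K44.Adj a₀ b₀) (h2 : K44.Adj b₀ a₁)
    (h3 : K44.Adj a₁ b₁) (ha : a₀ ≠ a₁) (hb : b₀ ≠ b₁) :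
    ∃ c, IsNumbering c ∧ c a₀ = 0 ∧ c b₀ = 4 ∧ c a₁ = 1 ∧ c b₁ = 5 := by
  rcases a₀ with i | i <;> rcases b₀ with j | j <;> rcases a₁ with k | k <;>
    rcases b₁ with l | l <;> simp [K44] at h1 h2 h3
  · obtain ⟨σ, h0, h1⟩ := exists_perm i k (by simpa using ha)
    obtain ⟨τ, h2, h3⟩ := exists_perm j l (by simpa using hb)
    refine ⟨Sum.elim (fun i => (σ i : ℕ)) (fun j => (τ j : ℕ) + 4), ⟨?_, ?_, ?_⟩, ?_⟩
    · rintro (a | a) (b | b) h <;> simp only [Sum.elim_inl, Sum.elim_inr] at h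
      · exact congrArg _ (σ.injective (Fin.ext h))
      · omega
      · omega
      · exact congrArg _ (τ.injective (Fin.ext (by omega)))
    · rintro (a | a) <;> simp only [Sum.elim_inl, Sum.elim_inr] <;> omega
    · rintro (a | a) (b | b) h <;> simp [K44] at h ⊢
    · simp [h0, h1, h2, h3]
  · obtain ⟨σ, h0, h1⟩ := exists_perm i k (by simpa using ha)
    obtain ⟨τ, h2, h3⟩ := exists_perm j l (by simpa using hb)
    refine ⟨Sum.elim (fun j => (τ j : ℕ) + 4) (fun i => (σ i : ℕ)), ⟨?_, ?_, ?_⟩, ?_⟩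
    · rintro (a | a) (b | b) h <;> simp only [Sum.elim_inl, Sum.elim_inr] at h
      · exact congrArg _ (τ.injective (Fin.ext (by omega)))
      · omega
      · omega
      · exact congrArg _ (σ.injective (Fin.ext h))
    · rintro (a | a) <;> simp only [Sum.elim_inl, Sum.elim_inr] <;> omega
    · rintro (a | a) (b | b) h <;> simp [K44] at h ⊢
    · simp [h0, h1, h2, h3]

/-! ### Interlacement of numbers and of vertices -/

theorem exists_indices_of_sublist {V : Type} {s : List V} {u v : V} (h : [u, v, u, v].Sublist s) :
    ∃ i j k l : Fin s.length, i < j ∧ j < k ∧ k < l ∧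
      s.get i = u ∧ s.get j = v ∧ s.get k = u ∧ s.get l = v := by
  obtain ⟨f, hf⟩ := List.sublist_iff_exists_fin_orderEmbedding_get_eq.mp h
  refine ⟨f ⟨0, by simp⟩, f ⟨1, by simp⟩, f ⟨2, by simp⟩, f ⟨3, by simp⟩, ?_, ?_, ?_, ?_⟩
  · exact f.strictMono (by simp)
  · exact f.strictMono (by simp)
  · exact f.strictMono (by simp)
  · simp only [← hf]
    simp

theorem sublist_of_map {V : Type} {c : V → ℕ} (hc : Function.Injective c) {s t : List V}
    (h : (t.map c).Sublist (s.map c)) : t.Sublist s := by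
  obtain ⟨t', ht, he⟩ := List.sublist_map_iff.mp h
  exact (List.map_injective_iff.mpr hc he) ▸ ht

theorem testBit_mask {l : List ℕ} {b : ℕ} (h : (mask l).testBit b = true) : b ∈ l := by
  induction l with
  | nil => simp [mask] at h
  | cons x l ih =>
    simp only [mask, Nat.testBit_or, Nat.one_shiftLeft, Nat.testBit_two_pow, Bool.or_eq_true,
      decide_eq_true_eq] at h
    rcases h with h | h
    · simp [h]
    · exact List.mem_cons_of_mem _ (ih h)

theorem nbrsAux_spec {a out b : ℕ} (l : List ℕ) : ∀ ins, (nbrsAux a out l ins).testBit b = true →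
    ∃ q r, l = q ++ a :: r ∧ ((b ≠ a ∧ b ∈ q) ∨ ins.testBit b = true) ∧
      (out.testBit b = true ∨ b ∈ r) := by
  induction l with
  | nil => intro ins h; simp [nbrsAux] at h
  | cons x l ih =>
    intro ins h
    by_cases hx : x = a
    · subst hx
      simp only [nbrsAux, Nat.beq_refl, cond_true, Nat.testBit_and, Nat.testBit_or,
        Bool.and_eq_true, Bool.or_eq_true] at h
      exact ⟨[], l, rfl, Or.inr h.1, h.2.imp id testBit_mask⟩
    · have hb : Nat.beq x a = false := Bool.eq_false_iff.mpr fun h => hx (Nat.eq_of_beq_eq_true h)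
      rw [nbrsAux, hb, cond_false] at h
      obtain ⟨q, r, rfl, h1, h2⟩ := ih _ h
      refine ⟨x :: q, r, rfl, ?_, h2⟩
      simp only [Nat.testBit_or, Nat.one_shiftLeft, Nat.testBit_two_pow, Bool.or_eq_true,
        decide_eq_true_eq] at h1
      rcases h1 with h1 | h1 | h1
      · exact Or.inl ⟨h1.1, List.mem_cons_of_mem _ h1.2⟩
      · exact Or.inr h1
      · exact Or.inl (h1 ▸ ⟨hx, List.mem_cons_self⟩)

theorem nbrs_spec {a b : ℕ} (l : List ℕ) : ∀ out, (nbrs a l out).testBit b = true →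
    ∃ p q r, l = p ++ a :: (q ++ a :: r) ∧ b ≠ a ∧ b ∈ q ∧
      (b ∈ p ∨ out.testBit b = true ∨ b ∈ r) := by
  induction l with
  | nil => intro out h; simp [nbrs] at h
  | cons x l ih =>
    intro out h
    by_cases hx : x = a
    · subst hx
      rw [nbrs, Nat.beq_refl, cond_true] at h
      obtain ⟨q, r, rfl, h1, h2⟩ := nbrsAux_spec l _ h
      have h1 : b ≠ x ∧ b ∈ q := by simpa using h1
      exact ⟨[], q, r, rfl, h1.1, h1.2, Or.inr h2⟩
    · have hb : Nat.beq x a = false := Bool.eq_false_iff.mpr fun h => hx (Nat.eq_of_beq_eq_true h)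
      rw [nbrs, hb, cond_false] at h
      obtain ⟨p, q, r, rfl, h1, h2, h3⟩ := ih _ h
      refine ⟨x :: p, q, r, rfl, h1, h2, ?_⟩
      simp only [Nat.testBit_or, Nat.one_shiftLeft, Nat.testBit_two_pow, Bool.or_eq_true,
        decide_eq_true_eq] at h3
      rcases h3 with h3 | (h3 | h3) | h3
      · exact Or.inl (List.mem_cons_of_mem _ h3)
      · exact Or.inr (Or.inl h3)
      · exact Or.inl (h3 ▸ List.mem_cons_self)
      · exact Or.inr (Or.inr h3)

theorem sublist_of_testBit {a b : ℕ} {s : List ℕ} (h : (nbrs a s 0).testBit b = true) :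
    b ≠ a ∧ ([a, b, a, b].Sublist s ∨ [b, a, b, a].Sublist s) := by
  obtain ⟨p, q, r, rfl, hne, hq, hpr⟩ := nbrs_spec s 0 h
  have hq := List.singleton_sublist.mpr hq
  refine ⟨hne, ?_⟩
  rcases hpr with hp | h0 | hr
  · have hp := List.singleton_sublist.mpr hp
    exact Or.inr (hp.append ((hq.append ((List.nil_sublist r).cons_cons a)).cons_cons a))
  · simp at h0
  · have hr := List.singleton_sublist.mpr hr
    exact Or.inl ((List.nil_sublist p).append ((hq.append (hr.cons_cons a)).cons_cons a))

theorem interlaced_of_testBit {V : Type} {c : V → ℕ} (hc : Function.Injective c) {s : List V}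
    {u v : V} (h : (nbrs (c u) (s.map c) 0).testBit (c v) = true) : u ≠ v ∧ Interlaced s u v := by
  obtain ⟨hne, h⟩ := sublist_of_testBit h
  refine ⟨fun e => hne (e ▸ rfl), ?_⟩
  rcases h with h | h
  · obtain ⟨i, j, k, l, h1, h2, h3, h4⟩ :=
      exists_indices_of_sublist (sublist_of_map hc (t := [u, v, u, v]) h)
    exact ⟨i, j, k, l, h1, h2, h3, Or.inl h4⟩
  · obtain ⟨i, j, k, l, h1, h2, h3, h4⟩ :=
      exists_indices_of_sublist (sublist_of_map hc (t := [v, u, v, u]) h)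
    exact ⟨i, j, k, l, h1, h2, h3, Or.inr h4⟩

theorem mem_of_testBit {s : List ℕ} {a b : ℕ} (h : (nbrs a s 0).testBit b = true) : b ∈ s := by
  rcases (sublist_of_testBit h).2 with h | h <;> exact h.subset (by simp)

theorem length_eq {x y : Fin 4 ⊕ Fin 4} (w : K44.Walk x y) (hw : w.IsEulerian) :
    w.length = 16 := by
  have h1 : w.edges.toFinset = (Finset.univ : Finset (Fin 4 × Fin 4)).image
      (fun p => s(Sum.inl p.1, Sum.inr p.2)) := by
    ext e
    rw [List.mem_toFinset, hw.mem_edges_iff]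
    induction e with | _ a b
    rw [SimpleGraph.mem_edgeSet]
    rcases a with a | a <;> rcases b with b | b <;> simp [K44]
  have h2 := congrArg Finset.card h1
  rw [List.toFinset_card_of_nodup hw.isTrail.edges_nodup, SimpleGraph.Walk.length_edges,
    Finset.card_image_of_injective _ (by rintro ⟨a, b⟩ ⟨a', b'⟩ h; simpa using h)] at h2
  simpa using h2

end K44Search

open K44Search in
/-- The interlacement graph of any Euler circuit of `K_{4,4}` has
diameter at most 2: any two distinct vertices are adjacent or have a common neighbor. -/
theorem K44_interlacement_diameter_le_two {x : Fin 4 ⊕ Fin 4} (w : K44.Walk x x)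
    (hw : w.IsEulerian) :
    ∀ u v : Fin 4 ⊕ Fin 4, u ≠ v →
      (interlacement w).Adj u v ∨
        ∃ z, (interlacement w).Adj u z ∧ (interlacement w).Adj z v := by
  have key : ∃ c, IsNumbering c ∧ good (w.support.dropLast.map c) = true := by
    have hlen := length_eq w hw
    have hn := hw.isTrail.edges_nodup
    clear hw
    -- Only the trail property and the length matter from here on, so the endpoint may be
    -- generalized in order to split off the first three edges.
    suffices H : ∀ (y : Fin 4 ⊕ Fin 4) (w : K44.Walk x y), w.length = 16 → w.edges.Nodup →
        ∃ c, IsNumbering c ∧ good (w.support.dropLast.map c) = true from H x w hlen hn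
    clear hlen hn w
    intro y w hlen hn
    match w, hlen, hn with
    | .cons (v := b₀) h1 (.cons (v := a₁) h2 (.cons (v := b₁) h3 p)), hlen, hn =>
      have ha : x ≠ a₁ := by
        rintro rfl
        simp [Sym2.eq_swap] at hn
      have hb : b₀ ≠ b₁ := by
        rintro rfl
        simp [Sym2.eq_swap] at hn
      obtain ⟨c, hc, e0, e1, e2, e3⟩ := exists_numbering h1 h2 h3 ha hb
      refine ⟨c, hc, ?_⟩
      have ht := trailFrom_of_isTrail hc _ [] hn (by simp)
      have hp : p.support.map c = 5 :: p.support.tail.map c := by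
        rw [← e3, ← List.map_cons, SimpleGraph.Walk.cons_tail_support]
      simp only [SimpleGraph.Walk.support_cons, List.tail_cons, List.map_cons, hp, e0, e1, e2] at ht
      have hl : (p.support.tail.map c).length = 13 := by
        simp only [SimpleGraph.Walk.length_cons] at hlen
        simp
        omega
      have := search_sound 13 5 _ _ _ search_init hl ht.2.2.2.2.2.2.2.2.2
      rw [List.map_dropLast]
      simp only [SimpleGraph.Walk.support_cons, List.map_cons, hp, e0, e1, e2]
      exact this
  obtain ⟨c, hc, hg⟩ := key
  have adj : ∀ {u v}, (nbrs (c u) (w.support.dropLast.map c) 0).testBit (c v) = true →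
      (interlacement w).Adj u v := by
    intro u v h
    obtain ⟨h1, h2⟩ := interlaced_of_testBit hc.inj h
    exact (SimpleGraph.fromRel_adj _ _ _).mpr ⟨h1, Or.inl h2⟩
  intro u v _
  have h := List.all_eq_true.mp (List.all_eq_true.mp hg (c u) (List.mem_range.mpr (hc.lt u)))
    (c v) (List.mem_range.mpr (hc.lt v))
  obtain ⟨z, hz⟩ := Nat.exists_testBit_of_ne_zero (Nat.ne_of_gt (by simpa only [Nat.blt_eq] using h))
  simp only [Nat.testBit_and, Nat.testBit_or, Nat.one_shiftLeft, Nat.testBit_two_pow,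
    Bool.and_eq_true, Bool.or_eq_true, decide_eq_true_eq] at hz
  obtain ⟨h1, rfl | h2⟩ := hz
  · exact Or.inl (adj h1)
  · obtain ⟨z, -, rfl⟩ := List.mem_map.mp (mem_of_testBit h1)
    exact Or.inr ⟨z, adj h1, (adj h2).symm⟩
end

section
/- For every Euler circuit C of K_{4,4}, the interlacement graph of C is strictly supercubic: every vertex has degree at least 3 and at least one vertex has degree strictly greater than 3. -/
/-!
Write the circuit as a cyclic word `F : Fin 16 → V`. Consecutive letters are adjacent, hence lie on
opposite sides, and the 16 edges `s(F i, F (i + 1))` are pairwise distinct. A vertex occurring at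
`m` positions uses `2 m` of the 4 edges at that vertex, so `m ≤ 2`; as there are 16 positions
and 8 vertices, every vertex occurs exactly twice (`card_fiber`). The word is therefore described,
up to renaming vertices, by the involution `π` of `Fin 16` exchanging the two occurrences of each
vertex (`exists_partner`).

Bipartiteness says that `π` preserves parity, and distinctness of the edges says that
`π i ≠ i + 2` and `π (i + 1) ≠ π i ± 1`, with indices modulo 16. Only 88 fixed-point-free
involutions satisfy these conditions. They are enumerated by a backtracking search
(`search_eq_true`), which confirms the degree bounds for each of them; `search_sound` says that
the search misses none. The degree of `F p` is bounded below by the number of positions `j`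
strictly between `p` and `π p` whose partner `π j` lies outside that interval
(`length_crossing_le_degv`), because such positions carry distinct vertices interlaced with `F p`.
-/

open scoped Classical

/-- The degree of a vertex. -/
noncomputable def degv {V : Type} (G : SimpleGraph V) (v : V) : ℕ :=
  (G.neighborSet v).ncard

/-! ### The search over pairings of the 16 positions -/

/-- Whether the list `l = [π (k-1), …, π 0]` (latest value first) may be extended by `π k = a`:
`π` preserves parity, is injective, has no fixed points, is an involution, and satisfies
`π k ≠ k ± 2` and `π k ≠ π (k - 1) ± 1` modulo 16. -/
def admissible (l : List ℕ) (a : ℕ) : Bool :=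
  Nat.beq (a % 2) (l.length % 2) && !Nat.beq a l.length &&
  !Nat.beq a ((l.length + 2) % 16) && !Nat.beq ((a + 2) % 16) l.length &&
  l.all (fun b => !Nat.beq b a) &&
  (if Nat.blt a l.length then Nat.beq (l.getD (l.length - 1 - a) 0) l.length
    else l.all (fun b => !Nat.beq b l.length)) &&
  (match l with
    | [] => true
    | b :: _ => !Nat.beq ((b + 1) % 16) a && !Nat.beq ((a + 1) % 16) b)

/-- The positions `j` strictly between `p` and `h p` whose partner `h j` lies outside. -/
def crossing (h : ℕ → ℕ) (p : ℕ) : List ℕ :=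
  (List.range 16).filter fun j =>
    Nat.blt (min p (h p)) j && Nat.blt j (max p (h p)) &&
      (Nat.blt (h j) (min p (h p)) || Nat.blt (max p (h p)) (h j))

/-- Every chord of the pairing `h` is crossed by at least 3 chords, and some chord by at least 4. -/
def good (h : ℕ → ℕ) : Bool :=
  (List.range 16).all (fun p => Nat.ble 3 (crossing h p).length) &&
  (List.range 16).any (fun p => Nat.ble 4 (crossing h p).length)

/-- The condition `h 0 ≠ h 15 ± 1` modulo 16 across the end of the word, which `admissible` cannot
see. -/
def wrap (h : ℕ → ℕ) : Bool :=
  !Nat.beq ((h 15 + 1) % 16) (h 0) && !Nat.beq ((h 0 + 1) % 16) (h 15)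

/-- The pairing recorded by a list of 16 values, latest first. -/
def ofRev (l : List ℕ) (j : ℕ) : ℕ := l.getD (15 - j) 0

/-- Checks that all extensions of `l` by `n` further admissible values which satisfy `wrap` are
good. -/
def search : ℕ → List ℕ → Bool
  | 0, l => !wrap (ofRev l) || good (ofRev l)
  | n + 1, l => (List.range 16).all fun a => !admissible l a || search n (a :: l)

theorem natBeq_eq_true {a b : ℕ} : Nat.beq a b = true ↔ a = b := by
  rw [Nat.beq_eq]

theorem natBeq_eq_false {a b : ℕ} : Nat.beq a b = false ↔ a ≠ b := by
  rw [← Bool.not_eq_true, natBeq_eq_true]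

theorem search_eq_true : search 16 [] = true := by decide +kernel

/-- The first `k` values of `g`, latest first. -/
def revInit (g : ℕ → ℕ) : ℕ → List ℕ
  | 0 => []
  | k + 1 => g k :: revInit g k

theorem length_revInit (g : ℕ → ℕ) (k : ℕ) : (revInit g k).length = k := by
  induction k with
  | zero => rfl
  | succ k ih => simp [revInit, ih]

theorem mem_revInit {g : ℕ → ℕ} {k b : ℕ} : b ∈ revInit g k ↔ ∃ i < k, g i = b := by
  induction k with
  | zero => simp [revInit]
  | succ k ih =>
    simp only [revInit, List.mem_cons, ih]
    constructor
    · rintro (rfl | ⟨i, hi, rfl⟩)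
      · exact ⟨k, by omega, rfl⟩
      · exact ⟨i, by omega, rfl⟩
    · rintro ⟨i, hi, rfl⟩
      rcases Nat.lt_succ_iff_lt_or_eq.mp hi with h | rfl
      · exact Or.inr ⟨i, h, rfl⟩
      · exact Or.inl rfl

theorem getD_revInit (g : ℕ → ℕ) (k i : ℕ) (hi : i < k) :
    (revInit g k).getD (k - 1 - i) 0 = g i := by
  induction k with
  | zero => omega
  | succ k ih =>
    rcases Nat.lt_succ_iff_lt_or_eq.mp hi with h | rfl
    · have : k + 1 - 1 - i = (k - 1 - i) + 1 := by omega
      rw [this, revInit, List.getD_cons_succ, ih h]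
    · simp [revInit]

theorem search_sound (g : ℕ → ℕ) (n k : ℕ) (hs : search n (revInit g k) = true)
    (hlt : ∀ i, i < k + n → g i < 16)
    (ha : ∀ i, i < k + n → admissible (revInit g i) (g i) = true) :
    search 0 (revInit g (k + n)) = true := by
  induction n generalizing k with
  | zero => exact hs
  | succ n ih =>
    rw [search, List.all_eq_true] at hs
    have h := hs (g k) (List.mem_range.mpr (hlt k (by omega)))
    rw [ha k (by omega)] at h
    have e : k + (n + 1) = k + 1 + n := by omega
    rw [e] at hlt ha ⊢
    exact ih (k + 1) (by simpa [revInit] using h) hlt ha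

theorem crossing_congr {g h : ℕ → ℕ} (H : ∀ i < 16, g i = h i) {p : ℕ} (hp : p < 16) :
    crossing g p = crossing h p := by
  unfold crossing
  apply List.filter_congr
  intro j hj
  rw [H p hp, H j (List.mem_range.mp hj)]

/-- The combinatorial heart: any pairing of 16 cyclic positions satisfying the constraints of a
circuit of `K44` has all chords crossed at least 3 times and some chord at least 4 times. -/
theorem pairing_bounds (π : Fin 16 → Fin 16) (hinv : ∀ i, π (π i) = i) (hne : ∀ i, π i ≠ i)
    (hpar : ∀ i, (π i).val % 2 = i.val % 2) (htwo : ∀ i, π i ≠ i + 2)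
    (hup : ∀ i, π (i + 1) ≠ π i + 1) (hdown : ∀ i, π i ≠ π (i + 1) + 1) :
    (∀ p < 16, 3 ≤ (crossing (fun n => (π (Fin.ofNat 16 n)).val) p).length) ∧
    (∃ p < 16, 4 ≤ (crossing (fun n => (π (Fin.ofNat 16 n)).val) p).length) := by
  set g : ℕ → ℕ := fun n => (π (Fin.ofNat 16 n)).val with hg
  have gval : ∀ i : Fin 16, g i.val = (π i).val := fun i => by simp [hg]
  have glt : ∀ n, g n < 16 := fun n => (π _).isLt
  have ginv : ∀ n < 16, g (g n) = n := by
    intro n hn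
    have := gval ⟨n, hn⟩
    simp only at this
    rw [this, gval, hinv]
  have gne : ∀ n < 16, g n ≠ n := by
    intro n hn h
    rw [gval ⟨n, hn⟩] at h
    exact hne ⟨n, hn⟩ (Fin.ext h)
  have gpar : ∀ n < 16, g n % 2 = n % 2 := by
    intro n hn
    rw [gval ⟨n, hn⟩]
    exact hpar _
  have gtwo : ∀ n < 16, g n ≠ (n + 2) % 16 := by
    intro n hn h
    rw [gval ⟨n, hn⟩] at h
    exact htwo ⟨n, hn⟩ (Fin.ext (by simpa [Fin.val_add] using h))
  have gtwo' : ∀ n < 16, (g n + 2) % 16 ≠ n := by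
    intro n hn h
    have := gtwo (g n) (glt n)
    rw [ginv n hn, h] at this
    exact this rfl
  have gup : ∀ n < 16, (g n + 1) % 16 ≠ g ((n + 1) % 16) := by
    intro n hn h
    have e : (n + 1) % 16 = ((⟨n, hn⟩ : Fin 16) + 1).val := by simp [Fin.val_add]
    rw [e, gval, gval ⟨n, hn⟩] at h
    exact hup ⟨n, hn⟩ (Fin.ext (by simpa [Fin.val_add] using h.symm))
  have gdown : ∀ n < 16, (g ((n + 1) % 16) + 1) % 16 ≠ g n := by
    intro n hn h
    have e : (n + 1) % 16 = ((⟨n, hn⟩ : Fin 16) + 1).val := by simp [Fin.val_add]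
    rw [e, gval, gval ⟨n, hn⟩] at h
    exact hdown ⟨n, hn⟩ (Fin.ext (by simpa [Fin.val_add] using h.symm))
  have hadm : ∀ k, k < 0 + 16 → admissible (revInit g k) (g k) = true := by
    intro k hk
    have hk : k < 16 := by omega
    have h1 : ∀ b ∈ revInit g k, b ≠ g k := by
      intro b hb h
      obtain ⟨i, hi, rfl⟩ := mem_revInit.mp hb
      have := ginv i (by omega)
      rw [h, ginv k hk] at this
      omega
    have h2 : g k < k → (revInit g k).getD (k - 1 - g k) 0 = k := by
      intro h
      rw [getD_revInit g k _ h, ginv k hk]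
    have h3 : ¬ g k < k → ∀ b ∈ revInit g k, b ≠ k := by
      intro h b hb e
      obtain ⟨i, hi, rfl⟩ := mem_revInit.mp hb
      have := ginv i (by omega)
      rw [e] at this
      omega
    have h4 : (match revInit g k with
        | [] => true
        | b :: _ => !Nat.beq ((b + 1) % 16) (g k) && !Nat.beq ((g k + 1) % 16) b) = true := by
      cases k with
      | zero => rfl
      | succ k =>
        have a := gup k (by omega)
        have b := gdown k (by omega)
        rw [Nat.mod_eq_of_lt hk] at a b
        simp [revInit, natBeq_eq_false, a, b]
    unfold admissible
    rw [h4, length_revInit]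
    have a1 := gpar k hk
    have a2 := gne k hk
    have a3 := gtwo k hk
    have a4 := gtwo' k hk
    by_cases h : g k < k
    · simp only [a1, a2, a3, a4, h, natBeq_eq_false, natBeq_eq_true, Nat.blt_eq, List.all_eq_true,
        h2 h, Bool.and_eq_true, Bool.not_eq_true', if_true, ne_eq, not_false_eq_true, true_and,
        and_true]
      exact h1
    · simp only [a1, a2, a3, a4, h, natBeq_eq_false, natBeq_eq_true, Nat.blt_eq, List.all_eq_true,
        Bool.and_eq_true, Bool.not_eq_true', if_false, ne_eq, not_false_eq_true, true_and,
        and_true]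
      exact ⟨h1, h3 h⟩
  have hs := search_sound g 16 0 search_eq_true (fun i _ => glt i) hadm
  have hread : ∀ i < 16, ofRev (revInit g (0 + 16)) i = g i := fun i hi =>
    getD_revInit g 16 i hi
  have hwrap : wrap (ofRev (revInit g (0 + 16))) = true := by
    have a := gup 15 (by omega)
    have b := gdown 15 (by omega)
    unfold wrap
    rw [hread 15 (by omega), hread 0 (by omega)]
    simpa [natBeq_eq_false] using ⟨a, b⟩
  rw [search, hwrap] at hs
  simp only [Bool.not_true, Bool.false_or, good, Bool.and_eq_true, List.all_eq_true,
    List.any_eq_true, List.mem_range, Nat.ble_eq] at hs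
  obtain ⟨hall, p, hp, hex⟩ := hs
  refine ⟨fun q hq => ?_, p, hp, ?_⟩
  · rw [← crossing_congr hread hq]
    exact hall q hq
  · rw [← crossing_congr hread hp]
    exact hex

/-! ### Cyclic words of closed trails in `K44` -/

theorem K44_adj_isLeft {a b : Fin 4 ⊕ Fin 4} (h : K44.Adj a b) : b.isLeft = !a.isLeft := by
  rcases a with a | a <;> rcases b with b | b <;> simp [K44] at h ⊢

theorem card_isLeft (c : Bool) :
    (Finset.univ.filter fun a : Fin 4 ⊕ Fin 4 => a.isLeft = c).card = 4 := by
  cases c <;> decide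

section Word

variable (F : Fin 16 → Fin 4 ⊕ Fin 4)

/-- The successors and predecessors of the occurrences of `v` are distinct neighbours of `v`, and
`v` has only 4 neighbours. -/
theorem card_fiber_le (hadj : ∀ i, K44.Adj (F i) (F (i + 1)))
    (hinj : Function.Injective fun i => s(F i, F (i + 1))) (v : Fin 4 ⊕ Fin 4) :
    (Finset.univ.filter fun i => F i = v).card ≤ 2 := by
  set S := Finset.univ.filter fun i => F i = v with hS
  have hmem : ∀ i, i ∈ S ↔ F i = v := fun i => by simp [hS]
  have hpred : ∀ i, K44.Adj (F (i - 1)) (F i) := fun i => by simpa using hadj (i - 1)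
  have hsucc_inj : ∀ i ∈ S, ∀ j ∈ S, F (i + 1) = F (j + 1) → i = j := by
    intro i hi j hj h
    rw [hmem] at hi hj
    apply hinj
    simp [hi, hj, h]
  have hpred_inj : ∀ i ∈ S, ∀ j ∈ S, F (i - 1) = F (j - 1) → i = j := by
    intro i hi j hj h
    rw [hmem] at hi hj
    have : i - 1 = j - 1 := by
      apply hinj
      simp [hi, hj, h]
    simpa using this
  have hmix : ∀ i ∈ S, ∀ j ∈ S, F (i + 1) ≠ F (j - 1) := by
    intro i hi j hj h
    rw [hmem] at hi hj
    have e : i = j - 1 := by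
      apply hinj
      simp [hi, hj, h, Sym2.eq_swap]
    have := (hpred j).ne
    rw [← e, hi, hj] at this
    exact this rfl
  have hdisj : Disjoint (S.image fun i => F (i + 1)) (S.image fun i => F (i - 1)) := by
    rw [Finset.disjoint_left]
    intro a ha hb
    obtain ⟨i, hi, rfl⟩ := Finset.mem_image.mp ha
    obtain ⟨j, hj, h⟩ := Finset.mem_image.mp hb
    exact hmix i hi j hj h.symm
  have hsub : (S.image fun i => F (i + 1)) ∪ (S.image fun i => F (i - 1)) ⊆
      Finset.univ.filter fun a : Fin 4 ⊕ Fin 4 => a.isLeft = !v.isLeft := by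
    intro a ha
    rw [Finset.mem_filter]
    refine ⟨Finset.mem_univ _, ?_⟩
    rcases Finset.mem_union.mp ha with ha | ha
    · obtain ⟨i, hi, rfl⟩ := Finset.mem_image.mp ha
      rw [← (hmem i).mp hi]
      exact K44_adj_isLeft (hadj i)
    · obtain ⟨i, hi, rfl⟩ := Finset.mem_image.mp ha
      rw [← (hmem i).mp hi]
      exact K44_adj_isLeft (hpred i).symm
  have hcard := Finset.card_le_card hsub
  rw [card_isLeft, Finset.card_union_of_disjoint hdisj,
    Finset.card_image_of_injOn (fun i hi j hj h => hsucc_inj i hi j hj h),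
    Finset.card_image_of_injOn (fun i hi j hj h => hpred_inj i hi j hj h)] at hcard
  omega

theorem card_fiber (hadj : ∀ i, K44.Adj (F i) (F (i + 1)))
    (hinj : Function.Injective fun i => s(F i, F (i + 1))) (v : Fin 4 ⊕ Fin 4) :
    (Finset.univ.filter fun i => F i = v).card = 2 := by
  have hsum : ∑ u : Fin 4 ⊕ Fin 4, (Finset.univ.filter fun i => F i = u).card =
      ∑ _u : Fin 4 ⊕ Fin 4, 2 := by
    rw [← Finset.card_eq_sum_card_fiberwise (fun i _ => Finset.mem_coe.mpr (Finset.mem_univ _))]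
    simp
  exact (Finset.sum_eq_sum_iff_of_le fun u _ => card_fiber_le F hadj hinj u).mp hsum v
    (Finset.mem_univ v)

theorem exists_partner (hadj : ∀ i, K44.Adj (F i) (F (i + 1)))
    (hinj : Function.Injective fun i => s(F i, F (i + 1))) :
    ∃ π : Fin 16 → Fin 16, ∀ i, π i ≠ i ∧ ∀ j, F j = F i ↔ j = i ∨ j = π i := by
  have h : ∀ i, ∃ k, k ≠ i ∧ ∀ j, F j = F i ↔ j = i ∨ j = k := by
    intro i
    obtain ⟨a, b, hab, hS⟩ := Finset.card_eq_two.mp (card_fiber F hadj hinj (F i))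
    have hmem : ∀ j, F j = F i ↔ j = a ∨ j = b := by
      intro j
      have := Finset.ext_iff.mp hS j
      simpa using this
    rcases (hmem i).mp rfl with rfl | rfl
    · exact ⟨b, hab.symm, hmem⟩
    · exact ⟨a, hab, fun j => (hmem j).trans or_comm⟩
  exact ⟨fun i => (h i).choose, fun i => (h i).choose_spec⟩

theorem isLeft_word (hadj : ∀ i, K44.Adj (F i) (F (i + 1))) (n : ℕ) (hn : n < 16) :
    (F ⟨n, hn⟩).isLeft = ((F 0).isLeft ^^ decide (n % 2 = 1)) := by
  induction n with
  | zero => simp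
  | succ n ih =>
    have e : (⟨n, by omega⟩ : Fin 16) + 1 = ⟨n + 1, hn⟩ := by
      apply Fin.ext
      simp [Fin.val_add]
      omega
    have h := K44_adj_isLeft (hadj ⟨n, by omega⟩)
    rw [e, ih] at h
    rw [h]
    rcases Nat.mod_two_eq_zero_or_one n with h0 | h0
    · have : (n + 1) % 2 = 1 := by omega
      simp [h0, this]
    · have : (n + 1) % 2 = 0 := by omega
      simp [h0, this]

/-- A partner function of the word of a circuit satisfies the hypotheses of `pairing_bounds`, hence
its conclusion. -/
theorem partner_bounds (hadj : ∀ i, K44.Adj (F i) (F (i + 1)))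
    (hinj : Function.Injective fun i => s(F i, F (i + 1))) (π : Fin 16 → Fin 16)
    (hπ : ∀ i, π i ≠ i ∧ ∀ j, F j = F i ↔ j = i ∨ j = π i) :
    (∀ p < 16, 3 ≤ (crossing (fun n => (π (Fin.ofNat 16 n)).val) p).length) ∧
    (∃ p < 16, 4 ≤ (crossing (fun n => (π (Fin.ofNat 16 n)).val) p).length) := by
  have hF : ∀ i, F (π i) = F i := fun i => ((hπ i).2 _).mpr (Or.inr rfl)
  apply pairing_bounds
  · intro i
    rcases ((hπ (π i)).2 i).mp (hF i).symm with h | h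
    · exact absurd h.symm (hπ i).1
    · exact h.symm
  · exact fun i => (hπ i).1
  · intro i
    have a := isLeft_word F hadj i.val i.isLt
    have b := isLeft_word F hadj (π i).val (π i).isLt
    simp only [Fin.eta] at a b
    rw [hF, a] at b
    have := decide_eq_decide.mp (Bool.xor_right_inj.mp b)
    omega
  · intro i h
    -- otherwise the edges leaving `i` and `i + 1` coincide
    have e : F (i + 1 + 1) = F i := by
      rw [← hF i, h, add_assoc]
      rfl
    have : i = i + 1 := by
      apply hinj
      simp only [e]
      exact Sym2.eq_swap
    simp at this
  · intro i h
    -- otherwise the edges leaving `i` and `π i` coincide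
    have e : F (π i + 1) = F (i + 1) := by rw [← h, hF]
    have : π i = i := by
      apply hinj
      simp only [e, hF]
    exact (hπ i).1 this
  · intro i h
    -- otherwise the edges leaving `i` and `π (i + 1)` coincide, so `F (i + 1) = F i`
    have e : F (π (i + 1) + 1) = F i := by rw [← h, hF]
    have : π (i + 1) = i := by
      apply hinj
      simp only [e, hF]
      exact Sym2.eq_swap
    have h2 := hF (i + 1)
    rw [this] at h2
    exact (hadj i).ne h2

end Word

/-! ### Degrees in the interlacement graph -/

theorem length_eq_sixteen {x : Fin 4 ⊕ Fin 4} (w : K44.Walk x x) (hw : w.IsEulerian) :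
    w.length = 16 := by
  have h1 : K44.edgeSet.encard = 16 := by
    rw [K44, SimpleGraph.encard_edgeSet_completeBipartiteGraph]
    simp
    norm_num
  have h2 : K44.edgeSet = (w.edges.toFinset : Set (Sym2 (Fin 4 ⊕ Fin 4))) := by
    ext e
    simp [hw.mem_edges_iff]
  rw [h2, Set.encard_coe_eq_coe_finsetCard, List.toFinset_card_of_nodup hw.isTrail.edges_nodup,
    SimpleGraph.Walk.length_edges] at h1
  exact_mod_cast h1

/-- Positions between the two occurrences of `w.getVert p` whose partner lies outside carry pairwise
distinct vertices, all interlaced with `w.getVert p`. -/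
theorem length_crossing_le_degv {x : Fin 4 ⊕ Fin 4} (w : K44.Walk x x) (hlen : w.length = 16)
    (π : Fin 16 → Fin 16)
    (hπ : ∀ i, π i ≠ i ∧ ∀ j : Fin 16, w.getVert j = w.getVert i ↔ j = i ∨ j = π i)
    (p : Fin 16) :
    (crossing (fun n => (π (Fin.ofNat 16 n)).val) p).length ≤
      degv (interlacement w) (w.getVert p) := by
  set g : ℕ → ℕ := fun n => (π (Fin.ofNat 16 n)).val with hg
  have gval : ∀ i : Fin 16, g i.val = (π i).val := fun i => by simp [hg]
  have glt : ∀ n, g n < 16 := fun n => (π _).isLt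
  -- the word, with the partner function transported to natural numbers
  have hsame : ∀ i < 16, ∀ j < 16, w.getVert j = w.getVert i ↔ j = i ∨ j = g i := by
    intro i hi j hj
    have := (hπ ⟨i, hi⟩).2 ⟨j, hj⟩
    simpa [Fin.ext_iff, ← gval] using this
  have hpartner : ∀ i < 16, w.getVert (g i) = w.getVert i := fun i hi =>
    (hsame i hi (g i) (glt i)).mpr (Or.inr rfl)
  have hL : w.support.dropLast.length = 16 := by simp [hlen]
  have hget : ∀ i (hi : i < w.support.dropLast.length),
      w.support.dropLast.get ⟨i, hi⟩ = w.getVert i := by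
    intro i hi
    simp [SimpleGraph.Walk.support_getElem_eq_getVert]
  have hcross : ∀ j, j ∈ crossing g p ↔ j < 16 ∧ (min p.val (g p) < j ∧ j < max p.val (g p)) ∧
      (g j < min p.val (g p) ∨ max p.val (g p) < g j) := by
    intro j
    simp only [crossing, List.mem_filter, List.mem_range, Bool.and_eq_true, Bool.or_eq_true,
      Nat.blt_eq]
  have hmin : w.getVert (min p.val (g p)) = w.getVert p := by
    rcases min_choice p.val (g p) with h | h <;> rw [h]
    exact hpartner p p.isLt
  have hmax : w.getVert (max p.val (g p)) = w.getVert p := by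
    rcases max_choice p.val (g p) with h | h <;> rw [h]
    exact hpartner p p.isLt
  have hmax_lt : max p.val (g p) < 16 := max_lt p.isLt (glt p)
  have hnodup : (crossing g p).Nodup := List.nodup_range.filter _
  have hinj : Set.InjOn w.getVert ((crossing g p).toFinset : Set ℕ) := by
    intro i hi j hj h
    rw [Finset.mem_coe, List.mem_toFinset, hcross] at hi hj
    rcases (hsame j hj.1 i hi.1).mp h with h | h
    · exact h
    · omega
  rw [← List.toFinset_card_of_nodup hnodup, ← Finset.card_image_of_injOn hinj,
    ← Set.ncard_coe_finset, degv]
  refine Set.ncard_le_ncard ?_ (Set.toFinite _)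
  intro u hu
  rw [Finset.mem_coe, Finset.mem_image] at hu
  obtain ⟨j, hj, rfl⟩ := hu
  rw [List.mem_toFinset, hcross] at hj
  obtain ⟨hj16, ⟨hlo, hhi⟩, hout⟩ := hj
  rw [SimpleGraph.mem_neighborSet, interlacement, SimpleGraph.fromRel_adj]
  constructor
  · intro h
    rcases (hsame p p.isLt j hj16).mp h.symm with h | h <;> omega
  · left
    have hgj := glt j
    have hj' := hpartner j hj16
    generalize min p.val (g p) = a at *
    generalize max p.val (g p) = b at *
    rcases hout with hout | hout
    · refine ⟨⟨g j, by omega⟩, ⟨a, by omega⟩, ⟨j, by omega⟩, ⟨b, by omega⟩, hout, hlo, hhi,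
        Or.inr ?_⟩
      simp only [hget]
      exact ⟨hj', hmin, trivial, hmax⟩
    · refine ⟨⟨a, by omega⟩, ⟨j, by omega⟩, ⟨b, by omega⟩, ⟨g j, by omega⟩, hlo, hhi, hout,
        Or.inl ?_⟩
      simp only [hget]
      exact ⟨hmin, trivial, hmax, hj'⟩

/-- The interlacement graph of any Euler circuit of `K_{4,4}` is
strictly supercubic: all degrees are at least 3 and some degree exceeds 3. -/
theorem K44_interlacement_strictly_supercubic {x : Fin 4 ⊕ Fin 4} (w : K44.Walk x x)
    (hw : w.IsEulerian) :
    (∀ v, 3 ≤ degv (interlacement w) v) ∧ (∃ v, 3 < degv (interlacement w) v) := by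
  have hlen := length_eq_sixteen w hw
  let F : Fin 16 → Fin 4 ⊕ Fin 4 := fun i => w.getVert i
  have hsucc : ∀ i : Fin 16, F (i + 1) = w.getVert (i.val + 1) := by
    intro i
    by_cases hi : i.val = 15
    · have e : i + 1 = 0 := by
        apply Fin.ext
        simp [Fin.val_add, hi]
      -- the closing step: position 16 of the walk is position 0 of the word
      have h16 : w.getVert 16 = x := by
        rw [← hlen]
        exact w.getVert_length
      simp [F, e, hi, h16]
    · have e : (i + 1).val = i.val + 1 := by
        rw [Fin.val_add]
        simp
        omega
      simp [F, e]
  have hadj : ∀ i, K44.Adj (F i) (F (i + 1)) := by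
    intro i
    rw [hsucc]
    exact w.adj_getVert_succ (by omega)
  have hinj : Function.Injective fun i => s(F i, F (i + 1)) := by
    intro i j h
    simp only [hsucc] at h
    have hi : i.val < w.edges.length := by simp [hlen]
    have hj : j.val < w.edges.length := by simp [hlen]
    apply Fin.ext
    apply (hw.isTrail.edges_nodup.getElem_inj_iff (hi := hi) (hj := hj)).mp
    rw [SimpleGraph.Walk.getElem_edges, SimpleGraph.Walk.getElem_edges]
    exact h
  obtain ⟨π, hπ⟩ := exists_partner F hadj hinj
  obtain ⟨hall, p, hp, hex⟩ := partner_bounds F hadj hinj π hπ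
  constructor
  · intro v
    have hpos : 0 < (Finset.univ.filter fun i => F i = v).card := by
      rw [card_fiber F hadj hinj v]
      norm_num
    obtain ⟨q, hq⟩ := Finset.card_pos.mp hpos
    have hq : w.getVert q = v := (Finset.mem_filter.mp hq).2
    rw [← hq]
    exact (hall q q.isLt).trans (length_crossing_le_degv w hlen π hπ q)
  · exact ⟨w.getVert p, lt_of_lt_of_le hex (length_crossing_le_degv w hlen π hπ ⟨p, hp⟩)⟩
end

section
/- For every Euler circuit C of K_{4,4}, the interlacement graph of C has a vertex of degree exactly 5. -/
/-!
An Euler circuit of `K_{4,4}` is a cyclic word of length 16 in which every vertex occurs twice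
(`hocc` below: the four edges at a vertex are used up two per occurrence), consecutive letters lie
on opposite sides, and no edge is traced twice. Hence the two positions of a vertex are joined by
a chord of even length, and never of length 2. The degree of a vertex is the number of letters
occurring exactly once on the arc between its two positions (`IsPartner.degv_eq`).

If a chord has length 6, its short arc `x a y b z c x` contains five distinct letters, since a
repetition would repeat an edge; so `x` has degree 5. Otherwise all chords have length 4 or 8,
and the positions of each residue class mod 4 are matched among themselves in one of three ways
(`exists_eq_stepPartner`). Inspection of these 81 matchings (`stepPartner_check`) shows that each
repeats an edge or has a vertex of degree 5.
-/

open scoped Classical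

/-! ### Positions on the circuit -/

/-- `k` lies strictly inside the arc of the 16-cycle of positions that runs forward from `a` to
`b`; subtraction in `Fin 16` wraps around, so `k - a` is the forward distance from `a` to `k`. -/
def inArc (a b k : Fin 16) : Prop := k ≠ a ∧ k - a < b - a

instance (a b k : Fin 16) : Decidable (inArc a b k) := by unfold inArc; infer_instance

/-- Separation by the chord `{a, b}`, expressed cyclically on the left and through the linear
order of the positions on the right. -/
theorem inArc_separates_iff {a b c d : Fin 16} (hac : a ≠ c) (had : a ≠ d)
    (hbc : b ≠ c) (hbd : b ≠ d) (hcd : c ≠ d) :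
    ((inArc a b c ∧ ¬ inArc a b d) ∨ (inArc a b d ∧ ¬ inArc a b c)) ↔
      (min a b < min c d ∧ min c d < max a b ∧ max a b < max c d) ∨
      (min c d < min a b ∧ min a b < max c d ∧ max c d < max a b) := by
  rcases le_total a b with h | h <;> rcases le_total c d with h' | h' <;>
  simp only [inArc, Fin.lt_def, Fin.le_def, Fin.sub_def, ne_eq, Fin.ext_iff, min_eq_left h,
    min_eq_right h, max_eq_left h, max_eq_right h, min_eq_left h', min_eq_right h',
    max_eq_left h', max_eq_right h'] at * <;>
  omega

/-- `π` sends each position of the cyclic word `p` to the other position carrying the same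
letter; in particular every letter that occurs does so exactly twice. -/
structure IsPartner {V : Type} (p : Fin 16 → V) (π : Fin 16 → Fin 16) : Prop where
  ne_self : ∀ i, π i ≠ i
  eq_iff : ∀ i j, p i = p j ↔ j = i ∨ j = π i

namespace IsPartner

variable {V : Type} {p : Fin 16 → V} {π : Fin 16 → Fin 16}

theorem apply_eq (h : IsPartner p π) (i : Fin 16) : p (π i) = p i :=
  ((h.eq_iff i (π i)).2 (Or.inr rfl)).symm

theorem invol (h : IsPartner p π) (i : Fin 16) : π (π i) = i := by
  rcases (h.eq_iff (π i) i).1 (h.apply_eq i) with h' | h'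
  · exact absurd h'.symm (h.ne_self i)
  · exact h'.symm

theorem interlaced_iff (h : IsPartner p π) {a c : Fin 16} (hac : p a ≠ p c) :
    Interlaced (List.ofFn p) (p a) (p c) ↔
      (inArc a (π a) c ∧ ¬ inArc a (π a) (π c)) ∨ (inArc a (π a) (π c) ∧ ¬ inArc a (π a) c) := by
  have hn : ∀ {i j : Fin 16}, p i = p a → p j = p c → i ≠ j := by
    rintro i j hi hj rfl
    exact hac (hi.symm.trans hj)
  have ha := h.apply_eq a
  have hc := h.apply_eq c
  rw [inArc_separates_iff (hn rfl rfl) (hn rfl hc) (hn ha rfl) (hn ha hc)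
    (h.ne_self c).symm]
  have key : Interlaced (List.ofFn p) (p a) (p c) ↔ ∃ i j k l : Fin 16, i < j ∧ j < k ∧ k < l ∧
      ((p i = p a ∧ p j = p c ∧ p k = p a ∧ p l = p c) ∨
       (p i = p c ∧ p j = p a ∧ p k = p c ∧ p l = p a)) := by
    have hlen : (List.ofFn p).length = 16 := List.length_ofFn
    constructor
    · rintro ⟨i, j, k, l, hij, hjk, hkl, H⟩
      refine ⟨i.cast hlen, j.cast hlen, k.cast hlen, l.cast hlen, hij, hjk, hkl, ?_⟩
      simpa only [List.get_ofFn] using H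
    · rintro ⟨i, j, k, l, hij, hjk, hkl, H⟩
      refine ⟨i.cast hlen.symm, j.cast hlen.symm, k.cast hlen.symm, l.cast hlen.symm,
        hij, hjk, hkl, ?_⟩
      simpa only [List.get_ofFn, Fin.cast_cast, Fin.cast_eq_self] using H
  rw [key]
  have hmin : ∀ x, p (min x (π x)) = p x := fun x => by
    rcases min_choice x (π x) with e | e <;> rw [e]
    exact h.apply_eq x
  have hmax : ∀ x, p (max x (π x)) = p x := fun x => by
    rcases max_choice x (π x) with e | e <;> rw [e]
    exact h.apply_eq x
  -- two positions of one letter, in increasing order, are the minimum and maximum of a chord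
  have hpos : ∀ {x i k : Fin 16}, i < k → p i = p x → p k = p x →
      i = min x (π x) ∧ k = max x (π x) := by
    intro x i k hik hi hk
    rcases (h.eq_iff x i).1 hi.symm with ei | ei <;>
    rcases (h.eq_iff x k).1 hk.symm with ek | ek <;> rw [ei, ek] at hik ⊢
    · exact absurd hik (lt_irrefl _)
    · exact ⟨(min_eq_left hik.le).symm, (max_eq_right hik.le).symm⟩
    · exact ⟨(min_eq_right hik.le).symm, (max_eq_left hik.le).symm⟩
    · exact absurd hik (lt_irrefl _)
  constructor
  · rintro ⟨i, j, k, l, hij, hjk, hkl, ⟨h1, h2, h3, h4⟩ | ⟨h1, h2, h3, h4⟩⟩ <;>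
    obtain ⟨rfl, rfl⟩ := hpos (hij.trans hjk) h1 h3 <;>
    obtain ⟨rfl, rfl⟩ := hpos (hjk.trans hkl) h2 h4
    · exact Or.inl ⟨hij, hjk, hkl⟩
    · exact Or.inr ⟨hij, hjk, hkl⟩
  · rintro (⟨h1, h2, h3⟩ | ⟨h1, h2, h3⟩)
    · exact ⟨_, _, _, _, h1, h2, h3, Or.inl ⟨hmin a, hmin c, hmax a, hmax c⟩⟩
    · exact ⟨_, _, _, _, h1, h2, h3, Or.inr ⟨hmin c, hmin a, hmax c, hmax a⟩⟩

/-- The degree of a letter in the interlacement graph is the number of letters occurring exactly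
once on an arc between its two positions. -/
theorem degv_eq (h : IsPartner p π) (hsurj : Function.Surjective p) (a : Fin 16) :
    degv (SimpleGraph.fromRel fun u v => Interlaced (List.ofFn p) u v) (p a) =
      (Finset.univ.filter fun k => inArc a (π a) k ∧ ¬ inArc a (π a) (π k)).card := by
  have hset : (SimpleGraph.fromRel fun u v => Interlaced (List.ofFn p) u v).neighborSet (p a) =
      p '' (Finset.univ.filter fun k => inArc a (π a) k ∧ ¬ inArc a (π a) (π k) :
        Finset (Fin 16)) := by
    have hsymm : ∀ u v, Interlaced (List.ofFn p) u v → Interlaced (List.ofFn p) v u := by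
      rintro u v ⟨i, j, k, l, h1, h2, h3, h4⟩
      exact ⟨i, j, k, l, h1, h2, h3, h4.symm⟩
    ext v
    obtain ⟨c, rfl⟩ := hsurj v
    simp only [SimpleGraph.mem_neighborSet, SimpleGraph.fromRel_adj, Finset.coe_filter,
      Finset.mem_univ, true_and, Set.mem_image, Set.mem_ofPred_eq]
    constructor
    · rintro ⟨hne, hI⟩
      have hI' : Interlaced (List.ofFn p) (p a) (p c) := hI.elim id (hsymm _ _)
      rcases (h.interlaced_iff hne).1 hI' with h' | h'
      · exact ⟨c, h', rfl⟩
      · exact ⟨π c, by rwa [h.invol], h.apply_eq c⟩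
    · rintro ⟨k, hk, hkc⟩
      have hne : p a ≠ p k := by
        intro e
        rcases (h.eq_iff a k).1 e with rfl | rfl
        · exact hk.1.1 rfl
        · exact lt_irrefl _ hk.1.2
      rw [← hkc]
      exact ⟨hne, Or.inl ((h.interlaced_iff hne).2 (Or.inl hk))⟩
  rw [degv, hset, Set.InjOn.ncard_image, Set.ncard_coe_finset]
  intro k hk k' hk' e
  simp only [Finset.coe_filter, Finset.mem_univ, true_and, Set.mem_ofPred_eq] at hk hk'
  rcases (h.eq_iff k k').1 e with rfl | rfl
  · rfl
  · exact absurd hk'.1 hk.2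

end IsPartner

/-! ### Double occurrence words tracing distinct edges -/

/-- The matchings of the 16 positions with all chords of length 4 or 8. Each residue class mod 4,
`{r, r + 4, r + 8, r + 12}`, is matched in one of three ways, selected by `c r`. -/
def stepPartner (c : Fin 4 → Fin 3) (i : Fin 16) : Fin 16 :=
  let r : Fin 4 := Fin.ofNat 4 i.val
  match c r with
  | 0 => if i.val / 4 % 2 = 0 then i + 4 else i - 4
  | 1 => i + 8
  | 2 => if i.val / 4 % 2 = 0 then i - 4 else i + 4

set_option maxRecDepth 100000 in
/-- Each of the 81 matchings `stepPartner c` makes two edges of the word coincide or yields a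
letter of degree 5. -/
theorem stepPartner_check (c : Fin 4 → Fin 3) :
    (∃ i, stepPartner c (i + 1) = stepPartner c i + 1) ∨
    (∃ i, stepPartner c (i + 1) = stepPartner c i - 1) ∨
    ∃ a, (Finset.univ.filter fun k => inArc a (stepPartner c a) k ∧
      ¬ inArc a (stepPartner c a) (stepPartner c k)).card = 5 := by
  revert c
  decide +kernel

theorem exists_eq_stepPartner {π : Fin 16 → Fin 16} (hinv : ∀ i, π (π i) = i)
    (hstep : ∀ i, π i = i + 4 ∨ π i = i + 8 ∨ π i = i + 12) :
    ∃ c : Fin 4 → Fin 3, π = stepPartner c := by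
  have hinj : Function.Injective π := (show Function.Involutive π from hinv).injective
  -- a chord of length 4 forces the complementary chord of length 4 in its residue class
  have hfour : ∀ i, π i = i + 4 → π (i + 4) = i ∧ π (i + 8) = i + 12 ∧ π (i + 12) = i + 8 := by
    intro i hi
    have h4 : π (i + 4) = i := by rw [← hi, hinv]
    have h8 : π (i + 8) = i + 12 := by
      rcases hstep (i + 8) with h | h | h
      · rw [h, add_assoc]; rfl
      · rw [show i + 8 + 8 = i by rw [add_assoc]; exact add_zero i] at h
        simpa using hinj (h.trans h4.symm)
      · rw [show i + 8 + 12 = i + 4 by rw [add_assoc]; rfl, ← hi] at h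
        simpa using hinj h
    exact ⟨h4, h8, by rw [← h8, hinv]⟩
  have height : ∀ i, π i = i + 8 → π (i + 8) = i ∧ π (i + 4) = i + 12 ∧ π (i + 12) = i + 4 := by
    intro i hi
    have h8 : π (i + 8) = i := by rw [← hi, hinv]
    have h4 : π (i + 4) = i + 12 := by
      rcases hstep (i + 4) with h | h | h
      · rw [show i + 4 + 4 = i + 8 by rw [add_assoc]; rfl, ← hi] at h
        simpa using hinj h
      · rw [h, add_assoc]; rfl
      · rw [show i + 4 + 12 = i by rw [add_assoc]; exact add_zero i] at h
        simpa using hinj (h.trans h8.symm)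
    exact ⟨h8, h4, by rw [← h4, hinv]⟩
  have hclass : ∀ r : Fin 4, ∃ c : Fin 3, ∀ i : Fin 16, Fin.ofNat 4 i.val = r →
      π i = stepPartner (fun _ => c) i := by
    intro r
    have hmem : ∀ (r : Fin 4) (i : Fin 16), Fin.ofNat 4 i.val = r →
        i = r.castLE (by norm_num) ∨ i = r.castLE (by norm_num) + 4 ∨
        i = r.castLE (by norm_num) + 8 ∨ i = r.castLE (by norm_num) + 12 := by decide +kernel
    rcases hstep (r.castLE (by norm_num)) with h | h | h
    · obtain ⟨h1, h2, h3⟩ := hfour _ h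
      refine ⟨0, fun i hi => ?_⟩
      rcases hmem r i hi with rfl | rfl | rfl | rfl <;> simp only [h, h1, h2, h3] <;>
        clear * - r <;> revert r <;> decide +kernel
    · obtain ⟨h1, h2, h3⟩ := height _ h
      refine ⟨1, fun i hi => ?_⟩
      rcases hmem r i hi with rfl | rfl | rfl | rfl <;> simp only [h, h1, h2, h3] <;>
        clear * - r <;> revert r <;> decide +kernel
    · -- the chord of length 4 now starts at `r + 12`
      obtain ⟨h1, h2, h3⟩ := hfour (r.castLE (by norm_num) + 12) (by
        rw [← h, hinv, h, add_assoc]; exact (add_zero _).symm)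
      rw [add_assoc, add_assoc, show (12 : Fin 16) + 8 = 4 from rfl,
        show (12 : Fin 16) + 12 = 8 from rfl] at h2 h3
      have h0 : π (r.castLE (by norm_num) + 12) = r.castLE (by norm_num) := by rw [← h, hinv]
      refine ⟨2, fun i hi => ?_⟩
      rcases hmem r i hi with rfl | rfl | rfl | rfl <;> simp only [h, h0, h2, h3] <;>
        clear * - r <;> revert r <;> decide +kernel
  choose c hc using hclass
  exact ⟨c, funext fun i => hc _ i rfl⟩

/-- A cyclic word in which every vertex occurs twice, at positions of equal parity, and which
traces no edge twice has an interlacement graph with a vertex of degree 5. -/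
theorem exists_degree_five_of_word {p : Fin 16 → Fin 4 ⊕ Fin 4} {π : Fin 16 → Fin 16}
    (h : IsPartner p π) (hsurj : Function.Surjective p)
    (hpar : ∀ i j, p i = p j → i.val % 2 = j.val % 2)
    (hedge : ∀ i j, s(p i, p (i + 1)) = s(p j, p (j + 1)) → i = j) :
    ∃ v, degv (SimpleGraph.fromRel fun u v => Interlaced (List.ofFn p) u v) v = 5 := by
  by_contra! hno
  have hcard : ∀ a, (Finset.univ.filter fun k =>
      inArc a (π a) k ∧ ¬ inArc a (π a) (π k)).card ≠ 5 := fun a => by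
    rw [← h.degv_eq hsurj a]
    exact hno _
  have hsame : ∀ i, π (i + 1) ≠ π i + 1 := by
    intro i e
    refine h.ne_self i (hedge _ _ ?_)
    rw [← e, h.apply_eq, h.apply_eq]
  have hopp : ∀ i, π (i + 1) ≠ π i - 1 := by
    intro i e
    have e' : π (i + 1) + 1 = π i := by rw [e, sub_add_cancel]
    have hi : π (i + 1) = i := by
      refine hedge _ _ ?_
      rw [e', h.apply_eq, h.apply_eq, Sym2.eq_swap]
    have := hpar (π (i + 1)) (i + 1) (h.apply_eq _)
    rw [hi] at this
    simp only [Fin.val_add, Fin.val_one] at this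
    omega
  have htwo : ∀ i, p (i + 2) ≠ p i := by
    intro i e
    have : i = i + 1 := by
      refine hedge _ _ ?_
      rw [show i + 1 + 1 = i + 2 by rw [add_assoc]; rfl, e, Sym2.eq_swap]
    simp at this
  -- a chord of length 6 belongs to a letter of degree 5
  have hsix : ∀ i, π i ≠ i + 6 := by
    intro a ha
    have h15 : p (a + 5) ≠ p (a + 1) := by
      intro e
      have : a = a + 5 := by
        refine hedge _ _ ?_
        rw [show a + 5 + 1 = a + 6 by rw [add_assoc]; rfl, e, ← ha, h.apply_eq, Sym2.eq_swap]
      simp at this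
    refine hcard a ?_
    have hdist : ∀ k k', inArc a (a + 6) k → inArc a (a + 6) k' → k ≠ k' → p k ≠ p k' := by
      have hcases : ∀ a k k' : Fin 16, inArc a (a + 6) k → inArc a (a + 6) k' → k ≠ k' →
          k.val % 2 = k'.val % 2 → k' = k + 2 ∨ k = k' + 2 ∨ (k = a + 1 ∧ k' = a + 5) ∨
            (k = a + 5 ∧ k' = a + 1) := by decide +kernel
      intro k k' hk hk' hne e
      rcases hcases a k k' hk hk' hne (hpar _ _ e) with rfl | rfl | ⟨rfl, rfl⟩ | ⟨rfl, rfl⟩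
      · exact htwo _ e.symm
      · exact htwo _ e
      · exact h15 e.symm
      · exact h15 e
    have hf : (Finset.univ.filter fun k => inArc a (π a) k ∧ ¬ inArc a (π a) (π k)) =
        Finset.univ.filter fun k => inArc a (a + 6) k := by
      refine Finset.filter_congr fun k _ => ?_
      rw [ha]
      exact ⟨And.left, fun hk => ⟨hk, fun hk' =>
        hdist _ _ hk' hk (h.ne_self k) (h.apply_eq k)⟩⟩
    rw [hf]
    clear * - a
    revert a
    decide +kernel
  have hstep : ∀ i, π i = i + 4 ∨ π i = i + 8 ∨ π i = i + 12 := by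
    intro i
    have h1 := hpar _ _ (h.apply_eq i)
    have h2 := hsix i
    have h3 := hsix (π i)
    have h4 : π i ≠ i + 2 := fun e => htwo i (by rw [← e, h.apply_eq])
    have h5 : i ≠ π i + 2 := fun e => htwo (π i) (by rw [← e, h.apply_eq])
    have h6 := h.ne_self i
    rw [h.invol] at h3
    generalize π i = j at *
    clear * - h1 h2 h3 h4 h5 h6
    simp only [ne_eq, Fin.ext_iff, Fin.val_add] at *
    omega
  obtain ⟨c, rfl⟩ := exists_eq_stepPartner h.invol hstep
  rcases stepPartner_check c with ⟨i, hi⟩ | ⟨i, hi⟩ | ⟨a, ha⟩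
  · exact hsame i hi
  · exact hopp i hi
  · exact hcard a ha

/-! ### Euler circuits of `K_{4,4}` -/

theorem K44_length {x : Fin 4 ⊕ Fin 4} {w : K44.Walk x x} (hw : w.IsEulerian) :
    w.length = 16 := by
  have h1 : K44.edgeSet.encard = 16 := by
    rw [K44, SimpleGraph.encard_edgeSet_completeBipartiteGraph]
    simp
    norm_num
  have h2 := hw.edgeSet_eq
  rw [← h2, ← SimpleGraph.Walk.coe_edges_toFinset, Set.encard_coe_eq_coe_finsetCard,
    List.toFinset_card_of_nodup hw.isTrail.edges_nodup, SimpleGraph.Walk.length_edges] at h1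
  exact_mod_cast h1

theorem K44_degree (v : Fin 4 ⊕ Fin 4) : K44.degree v = 4 := by
  rw [← SimpleGraph.card_neighborFinset_eq_degree]
  rcases v with v | v
  · have : K44.neighborFinset (Sum.inl v) = Finset.univ.map Function.Embedding.inr := by
      ext u
      rw [SimpleGraph.mem_neighborFinset]
      cases u <;> simp [K44]
    simp [this]
  · have : K44.neighborFinset (Sum.inr v) = Finset.univ.map Function.Embedding.inl := by
      ext u
      rw [SimpleGraph.mem_neighborFinset]
      cases u <;> simp [K44]
    simp [this]

/-- The interlacement graph of any Euler circuit of `K_{4,4}` has a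
vertex of degree exactly 5. -/
theorem K44_interlacement_degree_five {x : Fin 4 ⊕ Fin 4} (w : K44.Walk x x)
    (hw : w.IsEulerian) :
    ∃ v, degv (interlacement w) v = 5 := by
  have hlen := K44_length hw
  set p : Fin 16 → Fin 4 ⊕ Fin 4 := fun i => w.getVert i.val with hp
  have hsucc : ∀ i : Fin 16, p (i + 1) = w.getVert (i.val + 1) := by
    intro i
    rcases Fin.eq_castSucc_or_eq_last i with ⟨j, rfl⟩ | rfl
    · simp [hp]
    · have : w.getVert 16 = x := by rw [← hlen, SimpleGraph.Walk.getVert_length]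
      simp [hp, this]
  have hadj : ∀ i : Fin 16, K44.Adj (p i) (p (i + 1)) := fun i => by
    rw [hsucc]
    exact w.adj_getVert_succ (by omega)
  have hedgeGet : ∀ i : Fin 16, w.edges[i.val]'(by simp [hlen]) = s(p i, p (i + 1)) := by
    intro i
    rw [hsucc, SimpleGraph.Walk.getElem_edges_eq_edge_getElem_darts]
    rw [SimpleGraph.Dart.edge, SimpleGraph.Walk.fst_darts_getElem,
      SimpleGraph.Walk.snd_darts_getElem]
    simp [hp, SimpleGraph.Walk.support_getElem_eq_getVert]
  have hedge : ∀ i j, s(p i, p (i + 1)) = s(p j, p (j + 1)) → i = j := by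
    intro i j e
    rw [← hedgeGet, ← hedgeGet] at e
    exact Fin.ext ((hw.isTrail.edges_nodup.getElem_inj_iff).1 e)
  have hcover : ∀ e ∈ K44.edgeSet, ∃ i, s(p i, p (i + 1)) = e := by
    intro e he
    obtain ⟨n, hn, hne⟩ := List.getElem_of_mem (hw.mem_edges_iff.2 he)
    have hn' : n < 16 := by simpa [hlen] using hn
    exact ⟨⟨n, hn'⟩, by rw [← hedgeGet]; exact hne⟩
  have hside : ∀ n ≤ 16, ((w.getVert n).isLeft = x.isLeft ↔ n % 2 = 0) := by
    intro n
    induction n with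
    | zero => simp
    | succ n ih =>
      intro hn
      have ha := w.adj_getVert_succ (i := n) (by omega)
      have hflip : (w.getVert (n + 1)).isLeft = !(w.getVert n).isLeft := by
        revert ha
        rcases w.getVert n with u | u <;> rcases w.getVert (n + 1) with v | v <;> simp [K44]
      have hb : ∀ b c : Bool, ((!b) = c ↔ ¬ b = c) := by decide
      rw [hflip, hb, ih (by omega)]
      omega
  have hpar : ∀ i j, p i = p j → i.val % 2 = j.val % 2 := by
    intro i j e
    have hi := hside i.val (by omega)
    have hj := hside j.val (by omega)
    have e' : w.getVert i.val = w.getVert j.val := e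
    rw [e', hj] at hi
    omega
  -- the four edges at `v` are counted twice over by the occurrences of `v`
  have hocc : ∀ v, (Finset.univ.filter fun i => p i = v).card = 2 := by
    intro v
    have h1 : (Finset.univ.filter fun i => v ∈ s(p i, p (i + 1))).card = 4 := by
      refine Eq.trans ?_ (K44_degree v)
      rw [← SimpleGraph.card_incidenceFinset_eq_degree]
      refine Finset.card_bij (fun i _ => s(p i, p (i + 1))) ?_ ?_ ?_
      · intro i hi
        rw [SimpleGraph.mem_incidenceFinset]
        exact ⟨hadj i, by simpa using hi⟩
      · exact fun i _ j _ e => hedge i j e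
      · intro e he
        rw [SimpleGraph.mem_incidenceFinset] at he
        obtain ⟨i, rfl⟩ := hcover e he.1
        exact ⟨i, by simpa using he.2, rfl⟩
    have h2 : (Finset.univ.filter fun i => p (i + 1) = v).card =
        (Finset.univ.filter fun i => p i = v).card :=
      Finset.card_bij (fun i _ => i + 1) (by simp) (by simp)
        (fun i hi => ⟨i - 1, by simpa using hi, by simp⟩)
    have h3 : (Finset.univ.filter fun i => v ∈ s(p i, p (i + 1))) =
        (Finset.univ.filter fun i => p i = v) ∪ (Finset.univ.filter fun i => p (i + 1) = v) := by
      ext i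
      simp [eq_comm]
    rw [h3, Finset.card_union_of_disjoint, h2] at h1
    · omega
    · rw [Finset.disjoint_left]
      intro i hi hi'
      simp only [Finset.mem_filter, Finset.mem_univ, true_and] at hi hi'
      exact (hadj i).ne (hi.trans hi'.symm)
  have hsurj : Function.Surjective p := by
    intro v
    obtain ⟨i, hi⟩ := Finset.card_pos.1 (by rw [hocc v]; norm_num)
    exact ⟨i, by simpa using hi⟩
  have hpartner : ∀ i, ∃ k, k ≠ i ∧ ∀ j, p i = p j ↔ j = i ∨ j = k := by
    intro i
    have hi : i ∈ Finset.univ.filter fun j => p j = p i := by simp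
    have h1 := Finset.card_erase_of_mem hi
    rw [hocc] at h1
    obtain ⟨k, hk⟩ := Finset.card_eq_one.1 h1
    have hk' : ∀ j, (j ≠ i ∧ p j = p i) ↔ j = k := fun j => by
      simpa using Finset.ext_iff.1 hk j
    refine ⟨k, ((hk' k).2 rfl).1, fun j => ?_⟩
    rw [← hk' j, eq_comm]
    by_cases hj : j = i <;> simp [hj]
  choose π hne hπ using hpartner
  have hlist : w.support.dropLast = List.ofFn p := by
    refine List.ext_getElem (by simp [hlen]) fun n h1 h2 => ?_
    rw [List.getElem_ofFn, List.getElem_dropLast, SimpleGraph.Walk.support_getElem_eq_getVert]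
  rw [interlacement, hlist]
  exact exists_degree_five_of_word ⟨hne, hπ⟩ hsurj hpar hedge
end
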